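/- arXiv:2005.01036 — 8 statements merged into one kernel-verified Lean document; each statement's English description precedes it below -/
import Mathlib

section
/- Let Γ¹ be a Hermitian 4×4 complex matrix with (Γ¹)² = I, let λ ∈ ℝ, and let M : ℝ → M₄(ℂ) be a continuous matrix-valued function such that ∫ₐ^{+∞} ‖M(x)‖ dx < ∞ for some a ∈ ℝ. Suppose u : ℝ → ℂ⁴ is continuously differentiable, satisfies the eigenvalue equation −iΓ¹u'(x) + M(x)u(x) = λ·u(x) for all x ∈ ℝ, and satisfies u(x) → 0 as x → +∞. Then u ≡ 0. -/
noncomputable section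

open MeasureTheory

abbrev V4 : Type := EuclideanSpace ℂ (Fin 4)

/-- A `4 × 4` complex matrix acting on `ℂ⁴` as a continuous linear map. -/
def Mop (A : Matrix (Fin 4) (Fin 4) ℂ) : V4 →L[ℂ] V4 := Matrix.toEuclideanCLM (𝕜 := ℂ) A

/-- the Grönwall-type rigidity result.  If `Γ¹` is a Hermitian matrix with
`(Γ¹)² = I`, `M : ℝ → M₄(ℂ)` is continuous with `∫ₐ^∞ ‖M(x)‖ dx < ∞`, and a `C¹` function
`u : ℝ → ℂ⁴` satisfies `−iΓ¹u'(x) + M(x)u(x) = λ u(x)` for all `x` and `u(x) → 0` as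
`x → +∞`, then `u ≡ 0`. -/
theorem eigenfunction_vanishes
    (Γ1 : Matrix (Fin 4) (Fin 4) ℂ) (hΓ1_herm : Γ1.IsHermitian) (hΓ1_sq : Γ1 * Γ1 = 1)
    (lam : ℝ)
    (M : ℝ → Matrix (Fin 4) (Fin 4) ℂ)
    (hM_cont : Continuous fun x => Mop (M x))
    (a : ℝ) (hM_int : IntegrableOn (fun x => ‖Mop (M x)‖) (Set.Ici a))
    (u : ℝ → V4) (hu : ContDiff ℝ 1 u)
    (heq : ∀ x : ℝ, (-Complex.I) • Mop Γ1 (deriv u x) + Mop (M x) (u x) = (lam : ℂ) • u x)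
    (hlim : Filter.Tendsto u Filter.atTop (nhds 0)) :
    u = 0 := by
  have hΓΓ : ∀ v, Mop Γ1 (Mop Γ1 v) = v := by
    intro v
    have h : Mop Γ1 * Mop Γ1 = 1 := by
      unfold Mop
      rw [← map_mul, hΓ1_sq, map_one]
    exact congrArg (fun T : V4 →L[ℂ] V4 => T v) h
  have hsa : IsSelfAdjoint (Mop Γ1) := by
    unfold Mop
    rw [IsSelfAdjoint, ← map_star]
    congr 1
  have hsym : ∀ v, (inner ℂ v (Mop Γ1 v)).im = 0 := by
    intro v
    have h := hsa.isSymmetric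
    have h1 : inner ℂ (Mop Γ1 v) v = inner ℂ v (Mop Γ1 v) := h v v
    rw [← inner_conj_symm] at h1
    exact Complex.conj_eq_iff_im.mp h1
  have hd : ∀ x, deriv u x = Complex.I • Mop Γ1 ((lam : ℂ) • u x - Mop (M x) (u x)) := by
    intro x
    rw [← heq x, add_sub_cancel_right, map_smul, hΓΓ, smul_smul]
    simp
  set m : ℝ → ℝ := fun x => 2 * ‖Mop Γ1‖ * ‖Mop (M x)‖ with hm
  have hmc : Continuous m := by fun_prop
  have hN : ∀ x, HasDerivAt (fun x => ‖u x‖ ^ 2) (2 * (inner ℂ (u x) (deriv u x)).re) x := by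
    intro x
    have h := ((hu.differentiable one_ne_zero) x).hasDerivAt
    have h2 := (h.inner ℂ h)
    have h3 := Complex.reCLM.hasFDerivAt.comp_hasDerivAt x h2
    have e1 : (fun x => ‖u x‖ ^ 2) = Complex.reCLM ∘ fun t => inner ℂ (u t) (u t) := by
      ext y
      simp [inner_self_eq_norm_sq_to_K, ← Complex.ofReal_pow]
    have e2 : 2 * (inner ℂ (u x) (deriv u x)).re
        = Complex.reCLM (inner ℂ (u x) (deriv u x) + inner ℂ (deriv u x) (u x)) := by
      rw [← inner_conj_symm (deriv u x) (u x), Complex.reCLM_apply, Complex.add_re,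
        Complex.conj_re, two_mul]
    rw [e1, e2]
    exact h3
  have hN' : ∀ x, -(m x * ‖u x‖ ^ 2) ≤ 2 * (inner ℂ (u x) (deriv u x)).re := by
    intro x
    have h1 : (inner ℂ (u x) (deriv u x)).re
        = - (Complex.I * inner ℂ (u x) (Mop Γ1 (Mop (M x) (u x)))).re := by
      rw [hd, map_sub, map_smul, smul_sub, inner_sub_right, inner_smul_right, inner_smul_right,
        inner_smul_right]
      simp [hsym]
    have h2 : (Complex.I * inner ℂ (u x) (Mop Γ1 (Mop (M x) (u x)))).re
        ≤ ‖u x‖ * (‖Mop Γ1‖ * (‖Mop (M x)‖ * ‖u x‖)) := by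
      refine (Complex.re_le_norm _).trans ?_
      rw [norm_mul, Complex.norm_I, one_mul]
      refine (norm_inner_le_norm _ _).trans ?_
      gcongr
      refine ((Mop Γ1).le_opNorm _).trans ?_
      gcongr
      exact (Mop (M x)).le_opNorm _
    rw [h1]
    simp only [hm]
    nlinarith
  have hF : ∀ x, HasDerivAt (fun x => ∫ t in a..x, m t) (m x) x := fun x =>
    intervalIntegral.integral_hasDerivAt_right (hmc.intervalIntegrable _ _)
      (hmc.stronglyMeasurableAtFilter _ _) hmc.continuousAt
  have hG := fun x => (hN x).mul (hF x).exp
  have hmono : Monotone ((fun x => ‖u x‖ ^ 2) * fun x => Real.exp (∫ t in a..x, m t)) := by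
    refine monotone_of_hasDerivAt_nonneg hG fun x => ?_
    have h1 := hN' x
    have h2 := Real.exp_pos (∫ t in a..x, m t)
    simp only [Pi.zero_apply]
    nlinarith
  have hmi : IntegrableOn m (Set.Ioi a) :=
    (hM_int.mono_set Set.Ioi_subset_Ici_self).const_mul _
  have hFl := intervalIntegral_tendsto_integral_Ioi a hmi Filter.tendsto_id
  have hGl := (hlim.norm.pow 2).mul ((Real.continuous_exp.tendsto _).comp hFl)
  simp only [norm_zero, ne_eq, OfNat.ofNat_ne_zero, not_false_eq_true, zero_pow, zero_mul] at hGl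
  funext x
  have h0 : ‖u x‖ ^ 2 * Real.exp (∫ t in a..x, m t) ≤ 0 := hmono.ge_of_tendsto hGl x
  have h2 := Real.exp_pos (∫ t in a..x, m t)
  have h3 : ‖u x‖ ^ 2 ≤ 0 := nonpos_of_mul_nonpos_left h0 h2
  have h4 : ‖u x‖ = 0 := by nlinarith [norm_nonneg (u x)]
  simpa using h4
end
end

section
/- For every u in the Schwartz space 𝒮(ℝ, ℂ⁴) and every λ ≥ 1, one has ‖H₀u‖ ≤ (2 + ‖f‖_∞)·⟨Nu, u⟩^{1/2}, and consequently ‖H₀u‖ ≤ (2 + ‖f‖_∞)·‖Nu‖. -/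
noncomputable section

open MeasureTheory

/-- The `L²` inner product `⟨u, v⟩ = ∫ ⟨u(x), v(x)⟩ dx` (conjugate-linear in the first slot). -/
def L2inner (u v : ℝ → V4) : ℂ := ∫ x : ℝ, (inner ℂ (u x) (v x) : ℂ)

/-- The `L²` norm `‖u‖ = (∫ ‖u(x)‖² dx)^{1/2}`. -/
def L2norm (u : ℝ → V4) : ℝ := Real.sqrt (∫ x : ℝ, ‖u x‖ ^ 2)

/-- The operator `D = −i d/dx`. -/
def Dop (u : ℝ → V4) : ℝ → V4 := fun x => (-Complex.I) • deriv u x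

/-- The per-mode free Dirac Hamiltonian `H₀u = Γ¹Du + λgΓ²u + fu`. -/
def H0op (Γ1 Γ2 : Matrix (Fin 4) (Fin 4) ℂ) (g f : ℝ → ℝ) (lam : ℝ) (u : ℝ → V4) : ℝ → V4 :=
  fun x => Mop Γ1 (Dop u x) + (lam * g x) • Mop Γ2 (u x) + f x • u x

/-- The operator `Qu = −u'' + λ²g²u`. -/
def Qop (g : ℝ → ℝ) (lam : ℝ) (u : ℝ → V4) : ℝ → V4 :=
  fun x => -(deriv (deriv u) x) + (lam ^ 2 * g x ^ 2) • u x

/-- The comparison operator `Nu = Qu + (1 + x²)u`. -/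
def Nop (g : ℝ → ℝ) (lam : ℝ) (u : ℝ → V4) : ℝ → V4 :=
  fun x => Qop g lam u x + (1 + x ^ 2) • u x

theorem Mop_norm (A : Matrix (Fin 4) (Fin 4) ℂ) (hA : A.IsHermitian) (hs : A * A = 1) (v : V4) :
    ‖Mop A v‖ = ‖v‖ := by
  have h1 : star (Mop A) = Mop A := by
    unfold Mop
    rw [← map_star]
    congr 1
  have h2 : Mop A (Mop A v) = v := by
    have : Mop A * Mop A = 1 := by
      unfold Mop
      rw [← map_mul, hs, map_one]
    exact congrArg (fun T : V4 →L[ℂ] V4 => T v) this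
  have h3 : (inner ℂ (Mop A v) (Mop A v) : ℂ) = inner ℂ v v := by
    have := ContinuousLinearMap.adjoint_inner_left (Mop A) (Mop A v) v
    rw [← ContinuousLinearMap.star_eq_adjoint, h1, h2] at this
    have h4 := ContinuousLinearMap.adjoint_inner_left (Mop A) v (Mop A v)
    rw [← ContinuousLinearMap.star_eq_adjoint, h1, h2] at h4
    exact h4.symm
  rw [@norm_eq_sqrt_re_inner ℂ, @norm_eq_sqrt_re_inner ℂ _ _ _ _ v, h3]

theorem schwartz_int (k : ℕ) (u w : SchwartzMap ℝ V4) :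
    Integrable (fun x : ℝ => |x| ^ k * (‖u x‖ * ‖w x‖)) := by
  have h := u.integrable_pow_mul (volume : Measure ℝ) k
  refine (h.mul_const (SchwartzMap.seminorm ℝ 0 0 w)).mono'
    (by
      have := u.continuous
      have := w.continuous
      exact Continuous.aestronglyMeasurable (by fun_prop)) (Filter.Eventually.of_forall fun x => ?_)
  have := w.norm_le_seminorm ℝ x
  rw [Real.norm_of_nonneg (by positivity), Real.norm_eq_abs, mul_assoc]
  gcongr

theorem pointwise_bound (a b c h M : ℝ) (h0 : 0 ≤ h) (ha : 0 ≤ a) (hb : 0 ≤ b) (hc : 0 ≤ c)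
    (hM : 0 ≤ M) (hh : h ≤ a + b + M * c) : h ^ 2 ≤ (2 + M) ^ 2 * (a ^ 2 + b ^ 2 + c ^ 2) := by
  have h1 : h ^ 2 ≤ (a + b + M * c) ^ 2 := by gcongr
  have h2 : (a + b + M * c) ^ 2 ≤ (2 + M ^ 2) * (a ^ 2 + b ^ 2 + c ^ 2) := by
    nlinarith [sq_nonneg (a - b), sq_nonneg (M * a - c), sq_nonneg (M * b - c)]
  have h3 : (2 + M ^ 2) * (a ^ 2 + b ^ 2 + c ^ 2) ≤ (2 + M) ^ 2 * (a ^ 2 + b ^ 2 + c ^ 2) := by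
    gcongr
    nlinarith
  linarith

/-- first Nelson hypothesis for `(H₀, N)`: for every Schwartz `u` and every
`λ ≥ 1`, `‖H₀u‖ ≤ (2 + ‖f‖_∞)·⟨Nu, u⟩^{1/2}`, and consequently
`‖H₀u‖ ≤ (2 + ‖f‖_∞)·‖Nu‖`. -/
theorem nelson_first_hypothesis_H0
    (Γ1 Γ2 : Matrix (Fin 4) (Fin 4) ℂ)
    (hΓ1_herm : Γ1.IsHermitian) (hΓ2_herm : Γ2.IsHermitian)
    (hΓ1_sq : Γ1 * Γ1 = 1) (hΓ2_sq : Γ2 * Γ2 = 1)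
    (hanticomm : Γ1 * Γ2 + Γ2 * Γ1 = 0)
    (g : ℝ → ℝ) (hg_smooth : ContDiff ℝ (⊤ : ℕ∞) g) (Cb : ℝ) (hg_bdd : ∀ x : ℝ, |g x| ≤ Cb)
    (Cg : ℝ) (hCg : 0 < Cg) (hg' : ∀ x : ℝ, |deriv g x| ≤ Cg * |g x|)
    (f : ℝ → ℝ) (hf_smooth : ContDiff ℝ (⊤ : ℕ∞) f)
    (Mf : ℝ) (hf_bdd : ∀ x : ℝ, |f x| ≤ Mf)
    (Mf' : ℝ) (hf'_bdd : ∀ x : ℝ, |deriv f x| ≤ Mf')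
    (u : SchwartzMap ℝ V4) (lam : ℝ) (hlam : 1 ≤ lam) :
    L2norm (H0op Γ1 Γ2 g f lam ⇑u) ≤
      (2 + Mf) * Real.sqrt ((L2inner (Nop g lam ⇑u) ⇑u).re) ∧
    L2norm (H0op Γ1 Γ2 g f lam ⇑u) ≤ (2 + Mf) * L2norm (Nop g lam ⇑u) := by
  have hM : 0 ≤ Mf := (abs_nonneg _).trans (hf_bdd 0)
  have hCb : 0 ≤ Cb := (abs_nonneg _).trans (hg_bdd 0)
  set u1 : SchwartzMap ℝ V4 := SchwartzMap.derivCLM ℝ V4 u with hu1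
  set u2 : SchwartzMap ℝ V4 := SchwartzMap.derivCLM ℝ V4 u1 with hu2
  have d1 : deriv (⇑u) = ⇑u1 := by ext1 x; rfl
  have d2 : deriv (⇑u1) = ⇑u2 := by ext1 x; rfl
  have hd0 : ∀ x, HasDerivAt (⇑u) (u1 x) x := fun x => u.differentiableAt.hasDerivAt
  have hd1 : ∀ x, HasDerivAt (⇑u1) (u2 x) x := fun x => u1.differentiableAt.hasDerivAt
  have cu := u.continuous
  have cu1 := u1.continuous
  have cu2 := u2.continuous
  have cg := hg_smooth.continuous
  have cf := hf_smooth.continuous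
  have hg2 : ∀ x, g x ^ 2 ≤ Cb ^ 2 := fun x => sq_le_sq' (by linarith [neg_abs_le (g x), hg_bdd x])
    (by linarith [le_abs_self (g x), hg_bdd x])
  -- integrability
  have iA : Integrable (fun x => ‖u1 x‖ ^ 2) := by simpa [sq] using schwartz_int 0 u1 u1
  have iC : Integrable (fun x => ‖u x‖ ^ 2) := by simpa [sq] using schwartz_int 0 u u
  have iD : Integrable (fun x => ‖u2 x‖ ^ 2) := by simpa [sq] using schwartz_int 0 u2 u2
  have iX : Integrable (fun x : ℝ => x ^ 2 * ‖u x‖ ^ 2) := by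
    simpa [← sq] using schwartz_int 2 u u
  have iX4 : Integrable (fun x : ℝ => x ^ 4 * ‖u x‖ ^ 2) := by
    have e : ∀ x : ℝ, |x| ^ 4 = x ^ 4 := fun x => Even.pow_abs (by decide) x
    simpa [← sq, e] using schwartz_int 4 u u
  have iB : Integrable (fun x => lam ^ 2 * g x ^ 2 * ‖u x‖ ^ 2) := by
    refine (iC.const_mul (lam ^ 2 * Cb ^ 2)).mono'
      (Continuous.aestronglyMeasurable (by fun_prop)) (Filter.Eventually.of_forall fun x => ?_)
    rw [Real.norm_of_nonneg (by positivity)]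
    have := hg2 x
    gcongr
  have iI : Integrable (fun x => (inner ℂ (u2 x) (u x) : ℂ)) := by
    refine (schwartz_int 0 u2 u).mono'
      (Continuous.aestronglyMeasurable (by fun_prop)) (Filter.Eventually.of_forall fun x => ?_)
    simpa using norm_inner_le_norm (𝕜 := ℂ) (u2 x) (u x)
  have iI1 : Integrable (fun x => (inner ℂ (u1 x) (u x) : ℂ)) := by
    refine (schwartz_int 0 u1 u).mono'
      (Continuous.aestronglyMeasurable (by fun_prop)) (Filter.Eventually.of_forall fun x => ?_)
    simpa using norm_inner_le_norm (𝕜 := ℂ) (u1 x) (u x)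
  have iA' : Integrable (fun x => (inner ℂ (u1 x) (u1 x) : ℂ)) := by
    refine iA.mono'
      (Continuous.aestronglyMeasurable (by fun_prop)) (Filter.Eventually.of_forall fun x => ?_)
    simpa [sq] using norm_inner_le_norm (𝕜 := ℂ) (u1 x) (u1 x)
  -- integration by parts
  have ibp : ∫ x, (inner ℂ (u2 x) (u x) : ℂ).re = - ∫ x, ‖u1 x‖ ^ 2 := by
    have h := integral_eq_zero_of_hasDerivAt_of_integrable
      (fun x => (hd1 x).inner ℂ (hd0 x)) (iA'.add iI) iI1
    have h' := congrArg Complex.re h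
    rw [integral_add iA' iI, Complex.add_re] at h'
    have r1 : (∫ x, (inner ℂ (u1 x) (u1 x) : ℂ)).re = ∫ x, ‖u1 x‖ ^ 2 := by
      refine (integral_re iA').symm.trans ?_
      refine integral_congr_ae (Filter.Eventually.of_forall fun x => ?_)
      exact inner_self_eq_norm_sq (𝕜 := ℂ) (u1 x)
    have r2 : (∫ x, (inner ℂ (u2 x) (u x) : ℂ)).re = ∫ x, (inner ℂ (u2 x) (u x) : ℂ).re :=
      (integral_re iI).symm
    rw [r1, r2] at h'
    simp at h'
    linarith
  -- the pointwise expression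
  have hN : Nop g lam ⇑u = fun x =>
      -(u2 x) + (lam ^ 2 * g x ^ 2) • u x + (1 + x ^ 2) • u x := by
    ext1 x
    simp only [Nop, Qop, d1, d2]
  have cN : Continuous (Nop g lam ⇑u) := by
    rw [hN]; fun_prop
  have iN : Integrable (fun x => ‖Nop g lam ⇑u x‖ ^ 2) := by
    refine (((iD.const_mul 4).add (iC.const_mul (4 * (lam ^ 2 * Cb ^ 2) ^ 2 + 4))).add
      (iX4.const_mul 4)).mono'
      (Continuous.aestronglyMeasurable (by fun_prop)) (Filter.Eventually.of_forall fun x => ?_)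
    rw [Real.norm_of_nonneg (by positivity)]
    have hb : lam ^ 2 * g x ^ 2 ≤ lam ^ 2 * Cb ^ 2 := by
      have := hg2 x
      gcongr
    have h1 : ‖Nop g lam ⇑u x‖ ≤ ‖u2 x‖ + (lam ^ 2 * Cb ^ 2) * ‖u x‖ + ‖u x‖ + x ^ 2 * ‖u x‖ := by
      rw [hN]
      refine (norm_add₃_le).trans ?_
      rw [norm_neg, norm_smul, norm_smul, Real.norm_of_nonneg (by positivity),
        Real.norm_of_nonneg (by positivity)]
      nlinarith [norm_nonneg (u x)]
    have h2 : ‖Nop g lam ⇑u x‖ ^ 2 ≤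
        (‖u2 x‖ + (lam ^ 2 * Cb ^ 2) * ‖u x‖ + ‖u x‖ + x ^ 2 * ‖u x‖) ^ 2 := by gcongr
    refine h2.trans ?_
    simp only [Pi.add_apply]
    have h4 : ∀ a b c d : ℝ, (a + b + c + d) ^ 2 ≤ 4 * (a ^ 2 + b ^ 2 + c ^ 2 + d ^ 2) := by
      intro a b c d
      nlinarith [sq_nonneg (a - b), sq_nonneg (a - c), sq_nonneg (a - d), sq_nonneg (b - c),
        sq_nonneg (b - d), sq_nonneg (c - d)]
    refine (h4 _ _ _ _).trans (le_of_eq ?_)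
    ring
  have hre : ∀ x, (inner ℂ (Nop g lam ⇑u x) (u x) : ℂ).re =
      -(inner ℂ (u2 x) (u x) : ℂ).re + (lam ^ 2 * g x ^ 2 * ‖u x‖ ^ 2 +
        (‖u x‖ ^ 2 + x ^ 2 * ‖u x‖ ^ 2)) := by
    intro x
    have hs : ∀ r : ℝ, (inner ℂ (r • u x) (u x) : ℂ).re = r * ‖u x‖ ^ 2 := by
      intro r
      rw [← Complex.coe_smul r (u x), inner_smul_left, Complex.conj_ofReal, Complex.re_ofReal_mul]
      congr 1
      exact inner_self_eq_norm_sq (𝕜 := ℂ) (u x)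
    rw [hN]
    simp only [inner_add_left, inner_neg_left, Complex.add_re, Complex.neg_re, hs]
    ring
  have iNu : Integrable (fun x => (inner ℂ (Nop g lam ⇑u x) (u x) : ℂ)) := by
    refine (iN.add iC).mono'
      (Continuous.aestronglyMeasurable (by fun_prop)) (Filter.Eventually.of_forall fun x => ?_)
    refine (norm_inner_le_norm (𝕜 := ℂ) _ _).trans ?_
    simp only [Pi.add_apply]
    nlinarith [sq_nonneg (‖Nop g lam ⇑u x‖ - ‖u x‖), norm_nonneg (u x),
      norm_nonneg (Nop g lam ⇑u x), sq_nonneg (‖Nop g lam ⇑u x‖), sq_nonneg ‖u x‖]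
  have hE0 : (L2inner (Nop g lam ⇑u) ⇑u).re = ∫ x, (inner ℂ (Nop g lam ⇑u x) (u x) : ℂ).re :=
    (integral_re iNu).symm
  have iIr : Integrable (fun x => (inner ℂ (u2 x) (u x) : ℂ).re) := iI.re
  have hE : (L2inner (Nop g lam ⇑u) ⇑u).re = (∫ x, ‖u1 x‖ ^ 2) +
      ((∫ x, lam ^ 2 * g x ^ 2 * ‖u x‖ ^ 2) + ((∫ x, ‖u x‖ ^ 2) + ∫ x, x ^ 2 * ‖u x‖ ^ 2)) := by
    rw [hE0]
    simp only [hre]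
    have j1 : Integrable (fun x => -(inner ℂ (u2 x) (u x) : ℂ).re) := iIr.neg
    have j2 : Integrable (fun x => ‖u x‖ ^ 2 + x ^ 2 * ‖u x‖ ^ 2) := iC.add iX
    have j3 : Integrable (fun x => lam ^ 2 * g x ^ 2 * ‖u x‖ ^ 2 +
      (‖u x‖ ^ 2 + x ^ 2 * ‖u x‖ ^ 2)) := iB.add j2
    rw [integral_add j1 j3, integral_neg, ibp, neg_neg, integral_add iB j2, integral_add iC iX]
  set E := (L2inner (Nop g lam ⇑u) ⇑u).re with hEdef
  have pA : 0 ≤ ∫ x, ‖u1 x‖ ^ 2 := integral_nonneg fun x => by positivity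
  have pB : 0 ≤ ∫ x, lam ^ 2 * g x ^ 2 * ‖u x‖ ^ 2 := integral_nonneg fun x => by positivity
  have pC : 0 ≤ ∫ x, ‖u x‖ ^ 2 := integral_nonneg fun x => by positivity
  have pX : 0 ≤ ∫ x : ℝ, x ^ 2 * ‖u x‖ ^ 2 := integral_nonneg fun x => by positivity
  have key : L2norm (H0op Γ1 Γ2 g f lam ⇑u) ≤ (2 + Mf) * Real.sqrt E := by
    have : (2 + Mf) * Real.sqrt E = Real.sqrt ((2 + Mf) ^ 2 * E) := by
      rw [Real.sqrt_mul (by positivity), Real.sqrt_sq (by positivity)]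
    rw [this]
    refine Real.sqrt_le_sqrt ?_
    have hle : ∫ x, ‖H0op Γ1 Γ2 g f lam ⇑u x‖ ^ 2 ≤
        ∫ x, (2 + Mf) ^ 2 * (‖u1 x‖ ^ 2 + (lam ^ 2 * g x ^ 2 * ‖u x‖ ^ 2 + ‖u x‖ ^ 2)) := by
      refine integral_mono_of_nonneg (Filter.Eventually.of_forall fun x => by positivity)
        ((iA.add (iB.add iC)).const_mul _) (Filter.Eventually.of_forall fun x => ?_)
      have hh : ‖H0op Γ1 Γ2 g f lam ⇑u x‖ ≤ ‖u1 x‖ + |lam * g x| * ‖u x‖ + Mf * ‖u x‖ := by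
        unfold H0op
        refine (norm_add₃_le).trans ?_
        rw [Mop_norm Γ1 hΓ1_herm hΓ1_sq, norm_smul, Mop_norm Γ2 hΓ2_herm hΓ2_sq, norm_smul,
          Real.norm_eq_abs, Real.norm_eq_abs]
        have e : ‖Dop (⇑u) x‖ = ‖u1 x‖ := by simp [Dop, norm_smul, d1]
        rw [e]
        have := hf_bdd x
        gcongr
      refine (pointwise_bound _ _ _ _ Mf (norm_nonneg _) (norm_nonneg _) (by positivity)
        (norm_nonneg _) hM hh).trans (le_of_eq ?_)
      rw [mul_pow |lam * g x|, sq_abs]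
      ring
    refine hle.trans ?_
    have j1 : Integrable (fun x => lam ^ 2 * g x ^ 2 * ‖u x‖ ^ 2 + ‖u x‖ ^ 2) := iB.add iC
    rw [integral_const_mul, integral_add iA j1, integral_add iB iC]
    gcongr
    rw [hE]
    linarith
  refine ⟨key, key.trans ?_⟩
  gcongr
  refine Real.sqrt_le_sqrt ?_
  have h1 : E ≤ ∫ x, (2⁻¹ * ‖Nop g lam ⇑u x‖ ^ 2 + 2⁻¹ * ‖u x‖ ^ 2) := by
    rw [hE0]
    refine integral_mono iNu.re ((iN.const_mul _).add (iC.const_mul _)) fun x => ?_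
    refine (Complex.re_le_norm _).trans ((norm_inner_le_norm (𝕜 := ℂ) _ _).trans ?_)
    nlinarith [sq_nonneg (‖Nop g lam ⇑u x‖ - ‖u x‖)]
  rw [integral_add (iN.const_mul _) (iC.const_mul _), integral_const_mul,
    integral_const_mul] at h1
  linarith
end
end

section
/- For every u in the Schwartz space 𝒮(ℝ, ℂ⁴) and every λ ≥ 1, one has ⟨Qu, x²u⟩ + ⟨x²u, Qu⟩ ≥ −2‖u‖²; equivalently, Re⟨Qu, x²u⟩ ≥ −‖u‖². -/
noncomputable section

open MeasureTheory

lemma aux_integrable (p : ℝ → V4) (hp : Continuous p) (C : ℝ) (hC : ∀ x, ‖p x‖ ≤ C)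
    (q : SchwartzMap ℝ V4) (k : ℕ) :
    Integrable (fun x : ℝ => (inner ℂ (p x) ((x ^ k : ℝ) • q x) : ℂ)) := by
  have h1 : Integrable (fun x : ℝ => C * (‖x‖ ^ k * ‖q x‖)) :=
    (q.integrable_pow_mul volume k).const_mul C
  have hq : Continuous q := q.continuous
  refine h1.mono' ?_ ?_
  · exact (hp.inner ((continuous_id.pow k).smul hq)).aestronglyMeasurable
  · refine Filter.Eventually.of_forall fun x => ?_
    refine (norm_inner_le_norm _ _).trans ?_
    rw [norm_smul, norm_pow]
    exact mul_le_mul_of_nonneg_right (hC x) (by positivity)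

lemma aux_bdd (q : SchwartzMap ℝ V4) : ∃ C, ∀ x, ‖q x‖ ≤ C := by
  obtain ⟨C, hC⟩ := q.decay 0 0
  exact ⟨C, fun x => by simpa using hC.2 x⟩

lemma aux_main
    (g : ℝ → ℝ) (hg : Continuous g) (Cb : ℝ) (hg_bdd : ∀ x : ℝ, |g x| ≤ Cb)
    (u : SchwartzMap ℝ V4) (lam : ℝ) :
    -(L2norm ⇑u ^ 2) ≤ (L2inner (Qop g lam ⇑u) (fun x => (x ^ 2 : ℝ) • u x)).re := by
  obtain ⟨v, hv⟩ : ∃ v : SchwartzMap ℝ V4, ∀ x, v x = deriv u x :=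
    ⟨SchwartzMap.derivCLM ℝ V4 u, fun x => SchwartzMap.derivCLM_apply ℝ u x⟩
  obtain ⟨w, hw⟩ : ∃ w : SchwartzMap ℝ V4, ∀ x, w x = deriv v x :=
    ⟨SchwartzMap.derivCLM ℝ V4 v, fun x => SchwartzMap.derivCLM_apply ℝ v x⟩
  have hdu : deriv u = v := (funext hv).symm
  have hdv : deriv v = w := (funext hw).symm
  have hQ : Qop g lam u = fun x => -(w x) + (lam ^ 2 * g x ^ 2) • u x := by
    funext x
    simp only [Qop, hdu, hdv]
  have hu' : ∀ x, HasDerivAt u (v x) x := fun x => by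
    rw [hv]; exact u.hasDerivAt x
  have hv' : ∀ x, HasDerivAt v (w x) x := fun x => by
    rw [hw]; exact v.hasDerivAt x
  obtain ⟨Cu, hCu⟩ := aux_bdd u
  obtain ⟨Cv, hCv⟩ := aux_bdd v
  obtain ⟨Cw, hCw⟩ := aux_bdd w
  have cu : Continuous u := u.continuous
  have cv : Continuous v := v.continuous
  have cw : Continuous w := w.continuous
  have hR : Integrable (fun x : ℝ => (inner ℂ (Qop g lam u x) ((x ^ 2 : ℝ) • u x) : ℂ)) := by
    rw [hQ]
    refine aux_integrable _ (by fun_prop) (Cw + lam ^ 2 * Cb ^ 2 * Cu) (fun x => ?_) u 2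
    refine (norm_add_le _ _).trans ?_
    rw [norm_neg, norm_smul, Real.norm_of_nonneg (by positivity)]
    have h1 : g x ^ 2 ≤ Cb ^ 2 := sq_le_sq' (by linarith [(abs_le.1 (hg_bdd x)).1]) (abs_le.1 (hg_bdd x)).2
    have := hCu x
    have := hCw x
    gcongr
  have hU : Integrable (fun x : ℝ => ‖u x‖ ^ 2) := by
    have := (aux_integrable u cu Cu hCu u 0).re
    refine this.congr (Filter.Eventually.of_forall fun x => ?_)
    simp [inner_self_eq_norm_sq_to_K, ← Complex.ofReal_pow]
  have i1 := aux_integrable v cv Cv hCv u 1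
  have i2 := aux_integrable v cv Cv hCv v 2
  have i3 := aux_integrable w cw Cw hCw u 2
  have i0 := aux_integrable v cv Cv hCv u 2
  have hder : ∀ x : ℝ, HasDerivAt (fun x : ℝ => (inner ℂ (v x) ((x ^ 2 : ℝ) • u x) : ℂ))
      (2 * (inner ℂ (v x) ((x ^ 1 : ℝ) • u x) : ℂ) + inner ℂ (v x) ((x ^ 2 : ℝ) • v x)
        + inner ℂ (w x) ((x ^ 2 : ℝ) • u x)) x := by
    intro x
    have h := (hv' x).inner ℂ (((hasDerivAt_id x).pow 2).smul (hu' x))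
    have e : (2 * (inner ℂ (v x) ((x ^ 1 : ℝ) • u x) : ℂ) + inner ℂ (v x) ((x ^ 2 : ℝ) • v x)
        + inner ℂ (w x) ((x ^ 2 : ℝ) • u x))
        = inner ℂ (v x) ((x ^ 2 : ℝ) • v x + (((2 : ℕ) : ℝ) * x ^ (2 - 1) * 1) • u x)
          + inner ℂ (w x) ((x ^ 2 : ℝ) • u x) := by
      simp only [inner_add_right, inner_smul_right_eq_smul, Complex.real_smul]
      push_cast
      ring
    rw [e]
    exact h
  have iG := ((i1.const_mul 2).add i2).add i3
  have hzero := integral_eq_zero_of_hasDerivAt_of_integrable hder iG i0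
  have hzero' : ∫ x : ℝ, (2 * (inner ℂ (v x) ((x ^ 1 : ℝ) • u x) : ℂ)
      + inner ℂ (v x) ((x ^ 2 : ℝ) • v x) + inner ℂ (w x) ((x ^ 2 : ℝ) • u x)).re = 0 := by
    refine (integral_re iG).trans ?_
    exact congrArg Complex.re hzero
  have hRre : (L2inner (Qop g lam ⇑u) (fun x => (x ^ 2 : ℝ) • u x)).re
      = ∫ x : ℝ, (inner ℂ (Qop g lam u x) ((x ^ 2 : ℝ) • u x) : ℂ).re := by
    exact (integral_re hR).symm
  have hN : L2norm u ^ 2 = ∫ x : ℝ, ‖u x‖ ^ 2 :=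
    Real.sq_sqrt (integral_nonneg fun x => by positivity)
  have hpos : 0 ≤ ∫ x : ℝ, (((inner ℂ (Qop g lam u x) ((x ^ 2 : ℝ) • u x) : ℂ).re + ‖u x‖ ^ 2)
      + (2 * (inner ℂ (v x) ((x ^ 1 : ℝ) • u x) : ℂ)
      + inner ℂ (v x) ((x ^ 2 : ℝ) • v x) + inner ℂ (w x) ((x ^ 2 : ℝ) • u x)).re) := by
    refine integral_nonneg fun x => ?_
    have key : ((inner ℂ (Qop g lam u x) ((x ^ 2 : ℝ) • u x) : ℂ).re + ‖u x‖ ^ 2)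
      + (2 * (inner ℂ (v x) ((x ^ 1 : ℝ) • u x) : ℂ)
      + inner ℂ (v x) ((x ^ 2 : ℝ) • v x) + inner ℂ (w x) ((x ^ 2 : ℝ) • u x)).re
      = ‖x • v x + u x‖ ^ 2 + lam ^ 2 * g x ^ 2 * x ^ 2 * ‖u x‖ ^ 2 := by
      have e := norm_add_sq (𝕜 := ℂ) (x • v x) (u x)
      have hs : (inner ℂ (x • v x) (u x) : ℂ) = (x : ℂ) * inner ℂ (v x) (u x) := by
        rw [← Complex.coe_smul, inner_smul_left]; simp
      have hs2 : (inner ℂ ((lam ^ 2 * g x ^ 2) • u x) (u x) : ℂ)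
          = ((lam ^ 2 * g x ^ 2 : ℝ) : ℂ) * inner ℂ (u x) (u x) := by
        rw [← Complex.coe_smul, inner_smul_left, Complex.conj_ofReal]
      rw [hs, norm_smul, mul_pow, Real.norm_eq_abs, sq_abs, RCLike.re_to_complex,
        Complex.re_ofReal_mul] at e
      rw [e, hQ]
      simp only [inner_smul_right_eq_smul, inner_add_left, inner_neg_left, hs2,
        inner_self_eq_norm_sq_to_K, Complex.real_smul, Complex.coe_algebraMap, ← Complex.ofReal_pow,
        Complex.add_re, Complex.re_ofReal_mul, Complex.neg_re, Complex.ofReal_re]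
      have h2 : ∀ z : ℂ, (2 * z).re = 2 * z.re := fun z => by simp
      simp only [h2, Complex.re_ofReal_mul]
      ring
    show 0 ≤ _ + _
    rw [key]
    positivity
  have iGre := iG.re
  have hRi := hR.re
  simp only [RCLike.re_to_complex, Pi.add_apply] at iGre hRi
  have hsum : Integrable (fun x : ℝ =>
      (inner ℂ (Qop g lam u x) ((x ^ 2 : ℝ) • u x) : ℂ).re + ‖u x‖ ^ 2) := hRi.add hU
  rw [integral_add hsum iGre, hzero', add_zero, integral_add hRi hU, ← hRre, ← hN] at hpos
  linarith

/-- for every Schwartz `u` and every `λ ≥ 1`,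
`⟨Qu, x²u⟩ + ⟨x²u, Qu⟩ ≥ −2‖u‖²`; equivalently `Re⟨Qu, x²u⟩ ≥ −‖u‖²`. -/
theorem Q_weight_form_lower_bound
    (g : ℝ → ℝ) (hg_smooth : ContDiff ℝ (⊤ : ℕ∞) g) (Cb : ℝ) (hg_bdd : ∀ x : ℝ, |g x| ≤ Cb)
    (u : SchwartzMap ℝ V4) (lam : ℝ) (hlam : 1 ≤ lam) :
    -(2 * L2norm ⇑u ^ 2) ≤
      (L2inner (Qop g lam ⇑u) (fun x => (x ^ 2 : ℝ) • u x)
        + L2inner (fun x => (x ^ 2 : ℝ) • u x) (Qop g lam ⇑u)).re ∧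
    -(L2norm ⇑u ^ 2) ≤ (L2inner (Qop g lam ⇑u) (fun x => (x ^ 2 : ℝ) • u x)).re := by
  have h := aux_main g hg_smooth.continuous Cb hg_bdd u lam
  refine ⟨?_, h⟩
  have hc : L2inner (fun x => (x ^ 2 : ℝ) • u x) (Qop g lam ⇑u)
      = (starRingEnd ℂ) (L2inner (Qop g lam ⇑u) (fun x => (x ^ 2 : ℝ) • u x)) := by
    unfold L2inner
    rw [← integral_conj]
    simp only [inner_conj_symm]
  rw [hc, Complex.add_re, Complex.conj_re]
  linarith
end
end

section
/- For every u in the Schwartz space 𝒮(ℝ, ℂ⁴) and every λ ≥ 1, one has both ‖x²u‖² ≤ ‖Nu‖² + ‖u‖² and ‖Qu‖² ≤ ‖Nu‖² + ‖u‖². -/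
noncomputable section

open MeasureTheory

/-- Real part of the pointwise inner product. -/
def ipr (a b : V4) : ℝ := (inner ℂ a b : ℂ).re

lemma ipr_self (a : V4) : ipr a a = ‖a‖ ^ 2 := by
  unfold ipr
  exact inner_self_eq_norm_sq (𝕜 := ℂ) a

lemma ipr_comm (a b : V4) : ipr a b = ipr b a := by
  unfold ipr
  exact inner_re_symm (𝕜 := ℂ) a b

lemma abs_ipr_le (a b : V4) : |ipr a b| ≤ ‖a‖ * ‖b‖ := by
  unfold ipr
  exact (Complex.abs_re_le_norm _).trans (norm_inner_le_norm a b)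

lemma norm_comb (a b : V4) (t : ℝ) :
    ‖-a + t • b‖ ^ 2 = ipr a a - 2 * t * ipr a b + t ^ 2 * ipr b b := by
  have h := norm_add_sq (𝕜 := ℂ) (-a) (t • b)
  have h2 : RCLike.re (inner ℂ (-a) (t • b) : ℂ) = - (t * ipr a b) := by
    have : t • b = (t : ℂ) • b := (Complex.coe_smul t b).symm
    rw [this, inner_neg_left, inner_smul_right]
    simp [ipr]
  rw [h, h2, norm_neg, norm_smul, ipr_self, ipr_self, mul_pow, Real.norm_eq_abs, sq_abs]
  ring

lemma hasDerivAt_ipr {a b : ℝ → V4} {a' b' : V4} {x : ℝ} (ha : HasDerivAt a a' x)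
    (hb : HasDerivAt b b' x) :
    HasDerivAt (fun y => ipr (a y) (b y)) (ipr (a x) b' + ipr a' (b x)) x := by
  have h := HasDerivAt.inner ℂ ha hb
  have h2 := Complex.reCLM.hasFDerivAt.comp_hasDerivAt x h
  simpa [ipr, Function.comp_def] using h2

lemma continuous_ipr {a b : ℝ → V4} (ha : Continuous a) (hb : Continuous b) :
    Continuous fun x => ipr (a x) (b x) :=
  Complex.continuous_re.comp (ha.inner hb)

lemma weighted_bound (a : SchwartzMap ℝ V4) :
    ∃ C : ℝ, ∀ x : ℝ, (1 + x ^ 2) ^ 2 * ‖a x‖ ≤ C := by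
  obtain ⟨C0, -, h0⟩ := a.decay 0 0
  obtain ⟨C2, -, h2⟩ := a.decay 2 0
  obtain ⟨C4, -, h4⟩ := a.decay 4 0
  refine ⟨C0 + 2 * C2 + C4, fun x => ?_⟩
  have e0 := h0 x
  have e2 := h2 x
  have e4 := h4 x
  simp only [norm_iteratedFDeriv_zero, Real.norm_eq_abs, pow_zero, one_mul, sq_abs] at e0 e2 e4
  have : |x| ^ 4 = x ^ 4 := by
    rw [show (4 : ℕ) = 2 * 2 from rfl, pow_mul, sq_abs, pow_mul]
  rw [this] at e4
  nlinarith

lemma integrable_ipr (a b : SchwartzMap ℝ V4) (h : ℝ → ℝ) (hc : Continuous h) (C : ℝ)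
    (hC : ∀ x, |h x| ≤ C * (1 + x ^ 2) ^ 2) :
    Integrable (fun x => h x * ipr (a x) (b x)) := by
  obtain ⟨K, hK⟩ := weighted_bound a
  have hb : Integrable (fun x => ‖b x‖) := b.integrable.norm
  have hC0 : 0 ≤ C := by simpa using (abs_nonneg _).trans (hC 0)
  refine (hb.const_mul (C * K)).mono'
    (hc.mul (continuous_ipr a.continuous b.continuous)).aestronglyMeasurable
    (Filter.Eventually.of_forall fun x => ?_)
  rw [Real.norm_eq_abs, abs_mul]
  calc |h x| * |ipr (a x) (b x)| ≤ (C * (1 + x ^ 2) ^ 2) * (‖a x‖ * ‖b x‖) := by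
        gcongr
        · exact hC x
        · exact abs_ipr_le _ _
    _ = C * ((1 + x ^ 2) ^ 2 * ‖a x‖) * ‖b x‖ := by ring
    _ ≤ C * K * ‖b x‖ := by
        gcongr
        exact hK x

lemma L2norm_sq (u : ℝ → V4) : L2norm u ^ 2 = ∫ x : ℝ, ‖u x‖ ^ 2 := by
  unfold L2norm
  exact Real.sq_sqrt (integral_nonneg fun x => by positivity)

lemma integrable_comb (a b : SchwartzMap ℝ V4) (t : ℝ → ℝ) (ht : Continuous t) (C : ℝ)
    (hC : ∀ x, |t x| ≤ C * (1 + x ^ 2)) :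
    Integrable (fun x => ‖-a x + t x • b x‖ ^ 2) := by
  have hC0 : 0 ≤ C := by simpa using (abs_nonneg _).trans (hC 0)
  have i1 := integrable_ipr a a (fun _ => 1) continuous_const 1 (fun x => by
    simp only [abs_one]; nlinarith [sq_nonneg x, sq_nonneg (x ^ 2)])
  have i2 := integrable_ipr a b (fun x => 2 * t x) (by fun_prop) (2 * C) (fun x => by
    rw [abs_mul, abs_two]
    have := hC x
    have h3 : C * (1 + x ^ 2) ≤ C * (1 + x ^ 2) ^ 2 := by
      gcongr
      nlinarith [sq_nonneg x, sq_nonneg (x ^ 2)]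
    linarith)
  have i3 := integrable_ipr b b (fun x => t x ^ 2) (by fun_prop) (C ^ 2) (fun x => by
    rw [abs_pow, ← mul_pow]
    gcongr
    exact hC x)
  refine ((i1.sub i2).add i3).congr (Filter.Eventually.of_forall fun x => ?_)
  simp only [Pi.add_apply, Pi.sub_apply, one_mul]
  rw [norm_comb]

/-- the weight estimates: for every Schwartz `u` and every `λ ≥ 1`,
`‖x²u‖² ≤ ‖Nu‖² + ‖u‖²` and `‖Qu‖² ≤ ‖Nu‖² + ‖u‖²`. -/
theorem weight_estimates
    (g : ℝ → ℝ) (hg_smooth : ContDiff ℝ (⊤ : ℕ∞) g) (Cb : ℝ) (hg_bdd : ∀ x : ℝ, |g x| ≤ Cb)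
    (u : SchwartzMap ℝ V4) (lam : ℝ) (hlam : 1 ≤ lam) :
    L2norm (fun x => (x ^ 2 : ℝ) • u x) ^ 2 ≤ L2norm (Nop g lam ⇑u) ^ 2 + L2norm ⇑u ^ 2 ∧
    L2norm (Qop g lam ⇑u) ^ 2 ≤ L2norm (Nop g lam ⇑u) ^ 2 + L2norm ⇑u ^ 2 := by
  have hCb : 0 ≤ Cb := (abs_nonneg _).trans (hg_bdd 0)
  have hgc : Continuous g := hg_smooth.continuous
  set v : SchwartzMap ℝ V4 := SchwartzMap.derivCLM ℝ V4 u with hv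
  set w : SchwartzMap ℝ V4 := SchwartzMap.derivCLM ℝ V4 v with hw
  have dv : deriv ⇑u = ⇑v := by
    ext1 x
    simp [hv]
  have dw : deriv ⇑v = ⇑w := by
    ext1 x
    simp [hw]
  have hu' : ∀ x, HasDerivAt (⇑u) (v x) x := fun x => by
    rw [← dv]; exact u.differentiableAt.hasDerivAt
  have hv' : ∀ x, HasDerivAt (⇑v) (w x) x := fun x => by
    rw [← dw]; exact v.differentiableAt.hasDerivAt
  have hQ : Qop g lam ⇑u = fun x => -(w x) + (lam ^ 2 * g x ^ 2) • u x := by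
    unfold Qop
    rw [dv, dw]
  have hN : Nop g lam ⇑u = fun x => -(w x) + (lam ^ 2 * g x ^ 2 + (1 + x ^ 2)) • u x := by
    unfold Nop
    rw [hQ]
    ext1 x
    rw [add_smul (lam ^ 2 * g x ^ 2) (1 + x ^ 2) (u x), add_assoc]
  have hg2 : ∀ x, g x ^ 2 ≤ Cb ^ 2 := fun x => by
    rw [← sq_abs (g x)]
    have := hg_bdd x
    gcongr
  have iQ : Integrable (fun x => ‖Qop g lam ⇑u x‖ ^ 2) := by
    rw [hQ]
    refine integrable_comb w u _ (by fun_prop) (lam ^ 2 * Cb ^ 2) fun x => ?_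
    rw [abs_of_nonneg (by positivity)]
    have := mul_le_mul_of_nonneg_left (hg2 x) (sq_nonneg lam)
    have h2 : 0 ≤ lam ^ 2 * Cb ^ 2 * x ^ 2 := by positivity
    linarith
  have iN : Integrable (fun x => ‖Nop g lam ⇑u x‖ ^ 2) := by
    rw [hN]
    refine integrable_comb w u _ (by fun_prop) (lam ^ 2 * Cb ^ 2 + 1) fun x => ?_
    rw [abs_of_nonneg (by positivity)]
    have := mul_le_mul_of_nonneg_left (hg2 x) (sq_nonneg lam)
    have h2 : 0 ≤ lam ^ 2 * Cb ^ 2 * x ^ 2 := by positivity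
    linarith
  have iU : Integrable (fun x => ‖u x‖ ^ 2) := by
    have := integrable_ipr u u (fun _ => 1) continuous_const 1 (fun x => by
      simp only [abs_one]; nlinarith [sq_nonneg x, sq_nonneg (x ^ 2)])
    simpa [ipr_self] using this
  have iX : Integrable (fun x : ℝ => ‖(x ^ 2 : ℝ) • u x‖ ^ 2) := by
    have := integrable_ipr u u (fun x => x ^ 4) (by fun_prop) 1 (fun x => by
      rw [abs_of_nonneg (by positivity)]; nlinarith [sq_nonneg x, sq_nonneg (x ^ 2)])
    refine this.congr (Filter.Eventually.of_forall fun x => ?_)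
    simp only [ipr_self, norm_smul, mul_pow, Real.norm_eq_abs, sq_abs]
    ring
  -- the total derivative
  have hF : ∀ x, HasDerivAt
      (fun y => (2 * y) * ipr (u y) (u y) - (2 * (1 + y ^ 2)) * ipr (v y) (u y))
      (2 * ipr (u x) (u x) - (2 * (1 + x ^ 2)) * ipr (w x) (u x)
        - (2 * (1 + x ^ 2)) * ipr (v x) (v x)) x := fun x => by
    have h1 : HasDerivAt (fun y : ℝ => 2 * y) 2 x := by
      simpa using (hasDerivAt_id x).const_mul 2
    have h2 : HasDerivAt (fun y : ℝ => 2 * (1 + y ^ 2)) (4 * x) x := by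
      have := ((hasDerivAt_pow 2 x).const_add 1).const_mul 2
      refine this.congr_deriv ?_
      norm_num
      ring
    refine ((h1.mul (hasDerivAt_ipr (hu' x) (hu' x))).sub
      (h2.mul (hasDerivAt_ipr (hv' x) (hu' x)))).congr_deriv ?_
    rw [ipr_comm (u x) (v x)]
    ring
  have bw : ∀ x : ℝ, |2 * (1 + x ^ 2)| ≤ 2 * (1 + x ^ 2) ^ 2 := fun x => by
    rw [abs_of_nonneg (by positivity)]
    nlinarith [sq_nonneg x, sq_nonneg (x ^ 2)]
  have iF' : Integrable (fun x => 2 * ipr (u x) (u x) - (2 * (1 + x ^ 2)) * ipr (w x) (u x)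
        - (2 * (1 + x ^ 2)) * ipr (v x) (v x)) :=
    ((integrable_ipr u u (fun _ => 2) continuous_const 2 (fun x => by
      rw [abs_two]; nlinarith [sq_nonneg x, sq_nonneg (x ^ 2)])).sub
      (integrable_ipr w u _ (by fun_prop) 2 bw)).sub (integrable_ipr v v _ (by fun_prop) 2 bw)
  have iF : Integrable (fun y => (2 * y) * ipr (u y) (u y)
      - (2 * (1 + y ^ 2)) * ipr (v y) (u y)) :=
    (integrable_ipr u u (fun y => 2 * y) (by fun_prop) 2 (fun x => by
      rw [abs_le]
      constructor <;> nlinarith [sq_nonneg x, sq_nonneg (x ^ 2), sq_nonneg (x - 1),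
        sq_nonneg (x + 1)])).sub
      (integrable_ipr v u _ (by fun_prop) 2 bw)
  have zero := integral_eq_zero_of_hasDerivAt_of_integrable hF iF' iF
  have iQX : Integrable (fun x : ℝ => ‖Qop g lam ⇑u x‖ ^ 2 + ‖(x ^ 2 : ℝ) • u x‖ ^ 2) :=
    iQ.add iX
  have key : (∫ x, ‖Qop g lam ⇑u x‖ ^ 2) + (∫ x : ℝ, ‖(x ^ 2 : ℝ) • u x‖ ^ 2)
      ≤ (∫ x, ‖Nop g lam ⇑u x‖ ^ 2) + ∫ x, ‖u x‖ ^ 2 := by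
    rw [← add_zero ((∫ x, ‖Qop g lam ⇑u x‖ ^ 2) + _), ← zero, ← integral_add iQ iX,
      ← integral_add iQX iF', ← integral_add iN iU]
    refine integral_mono (iQX.add iF') (iN.add iU) fun x => ?_
    simp only [hQ, hN, norm_comb]
    rw [norm_smul, mul_pow ‖x ^ 2‖, Real.norm_eq_abs, sq_abs, ← ipr_self (u x)]
    have p1 : 0 ≤ ipr (u x) (u x) := by rw [ipr_self]; positivity
    have p2 : 0 ≤ ipr (v x) (v x) := by rw [ipr_self]; positivity
    have q1 : 0 ≤ (1 + x ^ 2) * ipr (v x) (v x) := by positivity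
    have q2 : 0 ≤ (1 + x ^ 2) * (lam ^ 2 * g x ^ 2) * ipr (u x) (u x) := by positivity
    have q3 : 0 ≤ x ^ 2 * ipr (u x) (u x) := by positivity
    linarith
  have n1 : 0 ≤ ∫ x, ‖Qop g lam ⇑u x‖ ^ 2 := integral_nonneg fun x => by positivity
  have n2 : 0 ≤ ∫ x : ℝ, ‖(x ^ 2 : ℝ) • u x‖ ^ 2 := integral_nonneg fun x => by positivity
  simp only [L2norm_sq]
  constructor <;> linarith
end
end

section
/- For every u in the Schwartz space 𝒮(ℝ, ℂ⁴) and every λ ≥ 1, one has ‖u''‖² ≤ ‖Qu‖² + 2C_g⁴‖u‖²; in particular there is a constant d > 0 depending only on C_g, and uniform in λ, with ‖D²u‖² ≤ d(‖Qu‖² + ‖u‖²). -/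
noncomputable section

open MeasureTheory

/-- Weighted inner products of Schwartz functions are integrable. -/
theorem integrable_weighted_inner (w : ℝ → ℝ) (hw : Continuous w) (B : ℝ) (hB : ∀ x, |w x| ≤ B)
    (a b : SchwartzMap ℝ V4) :
    Integrable (fun x => w x * inner ℝ (a x) (b x)) := by
  have h1 : Integrable (fun x => (SchwartzMap.seminorm ℝ 0 0 a * B) * ‖b x‖) :=
    (b.integrable.norm).const_mul _
  refine h1.mono' ?_ (Filter.Eventually.of_forall fun x => ?_)
  · exact (hw.mul (a.continuous.inner b.continuous)).aestronglyMeasurable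
  · rw [norm_mul, Real.norm_eq_abs]
    have h2 := norm_inner_le_norm (𝕜 := ℝ) (a x) (b x)
    have h3 := SchwartzMap.norm_le_seminorm ℝ a x
    have hB0 : 0 ≤ B := (abs_nonneg _).trans (hB x)
    calc |w x| * ‖inner ℝ (a x) (b x)‖ ≤ B * (SchwartzMap.seminorm ℝ 0 0 a * ‖b x‖) := by
          gcongr
          · exact hB x
          · exact h2.trans (by gcongr)
      _ = _ := by ring

theorem main_estimate
    (g : ℝ → ℝ) (hg_smooth : ContDiff ℝ (⊤ : ℕ∞) g) (Cb : ℝ) (hg_bdd : ∀ x : ℝ, |g x| ≤ Cb)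
    (Cg : ℝ) (hCg : 0 < Cg) (hg' : ∀ x : ℝ, |deriv g x| ≤ Cg * |g x|)
    (u : SchwartzMap ℝ V4) (lam : ℝ) :
      (∫ x, ‖deriv (deriv ⇑u) x‖ ^ 2) ≤
        (∫ x, ‖Qop g lam ⇑u x‖ ^ 2) + 2 * Cg ^ 4 * ∫ x, ‖u x‖ ^ 2 := by
  obtain ⟨u1, hu1⟩ : ∃ v : SchwartzMap ℝ V4, ⇑v = deriv ⇑u :=
    ⟨SchwartzMap.derivCLM ℝ V4 u, by ext1 x; exact SchwartzMap.derivCLM_apply ℝ u x⟩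
  obtain ⟨u2, hu2⟩ : ∃ v : SchwartzMap ℝ V4, ⇑v = deriv ⇑u1 :=
    ⟨SchwartzMap.derivCLM ℝ V4 u1, by ext1 x; exact SchwartzMap.derivCLM_apply ℝ u1 x⟩
  have hd1 : ∀ x, HasDerivAt u (u1 x) x := fun x => by
    rw [hu1]; exact u.differentiableAt.hasDerivAt
  have hd2 : ∀ x, HasDerivAt u1 (u2 x) x := fun x => by
    rw [hu2]; exact u1.differentiableAt.hasDerivAt
  have hgd : ∀ x, HasDerivAt g (deriv g x) x := fun x =>
    (hg_smooth.differentiable (by simp)).differentiableAt.hasDerivAt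
  have hgc : Continuous g := hg_smooth.continuous
  have hgc' : Continuous (deriv g) := hg_smooth.continuous_deriv (by simp)
  have hg2 : ∀ x, g x ^ 2 ≤ Cb ^ 2 := fun x => sq_le_sq' (abs_le.mp (hg_bdd x)).1 (abs_le.mp (hg_bdd x)).2
  have hgg : ∀ x, |g x * deriv g x| ≤ Cg * g x ^ 2 := fun x => by
    rw [abs_mul, ← sq_abs (g x)]
    nlinarith [hg' x, abs_nonneg (g x)]
  set V : ℝ → ℝ := fun x => lam ^ 2 * g x ^ 2 with hV
  set W : ℝ → ℝ := fun x => 2 * lam ^ 2 * (g x * deriv g x) with hW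
  have hVc : Continuous V := by fun_prop
  have hWc : Continuous W := by fun_prop
  have hV0 : ∀ x, 0 ≤ V x := fun x => by positivity
  have hVb : ∀ x, |V x| ≤ lam ^ 2 * Cb ^ 2 := fun x => by
    rw [abs_of_nonneg (hV0 x)]
    exact mul_le_mul_of_nonneg_left (hg2 x) (sq_nonneg _)
  have hWV : ∀ x, |W x| ≤ 2 * Cg * V x := fun x => by
    simp only [hW, hV, abs_mul (2 * lam ^ 2)]
    rw [abs_of_nonneg (by positivity : 0 ≤ 2 * lam ^ 2)]
    have := mul_le_mul_of_nonneg_left (hgg x) (by positivity : 0 ≤ 2 * lam ^ 2)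
    linarith
  have hWb : ∀ x, |W x| ≤ 2 * Cg * (lam ^ 2 * Cb ^ 2) := fun x =>
    (hWV x).trans (mul_le_mul_of_nonneg_left ((le_abs_self _).trans (hVb x)) (by positivity))
  have hVd : ∀ x, HasDerivAt V (W x) x := fun x => by
    refine (((hgd x).pow 2).const_mul (lam ^ 2)).congr_deriv ?_
    simp only [hW]; push_cast; ring
  have hone : ∀ a : SchwartzMap ℝ V4, Integrable (fun x => ‖a x‖ ^ 2) := fun a => by
    have := integrable_weighted_inner (fun _ => 1) continuous_const 1 (by simp) a a
    simpa [real_inner_self_eq_norm_sq] using this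
  have iF := integrable_weighted_inner V hVc _ hVb u1 u
  have iF' := ((integrable_weighted_inner W hWc _ hWb u1 u).add
    ((integrable_weighted_inner V hVc _ hVb u1 u1).add
      (integrable_weighted_inner V hVc _ hVb u2 u)))
  have hFd : ∀ x, HasDerivAt (fun x => V x * inner ℝ (u1 x) (u x))
      (((fun x => W x * inner ℝ (u1 x) (u x)) + ((fun x => V x * inner ℝ (u1 x) (u1 x)) +
        (fun x => V x * inner ℝ (u2 x) (u x)))) x) x := fun x => by
    refine ((hVd x).mul ((hd2 x).inner ℝ (hd1 x))).congr_deriv ?_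
    simp only [Pi.add_apply]; ring
  have hF0 := integral_eq_zero_of_hasDerivAt_of_integrable hFd iF' iF
  have hQ : ∀ x, ‖Qop g lam ⇑u x‖ ^ 2 =
      ‖u2 x‖ ^ 2 - 2 * (V x * inner ℝ (u2 x) (u x)) + V x ^ 2 * ‖u x‖ ^ 2 := fun x => by
    have : Qop g lam ⇑u x = V x • u x - u2 x := by
      simp only [Qop, hu2, hu1, hV]; abel
    rw [this, norm_sub_sq_real, norm_smul, inner_smul_left, real_inner_comm, mul_pow,
      Real.norm_eq_abs, sq_abs]
    simp only [conj_trivial]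
    ring
  have iQ : Integrable (fun x => ‖Qop g lam ⇑u x‖ ^ 2) := by
    simp only [hQ]
    refine ((hone u2).sub ((integrable_weighted_inner V hVc _ hVb u2 u).const_mul 2)).add ?_
    have := integrable_weighted_inner (fun x => V x ^ 2) (by fun_prop) ((lam ^ 2 * Cb ^ 2) ^ 2)
      (fun x => by rw [abs_pow]; exact pow_le_pow_left₀ (abs_nonneg _) (hVb x) 2) u u
    simpa only [real_inner_self_eq_norm_sq] using this
  have key := integral_mono (hone u2) ((iQ.add ((hone u).const_mul (2 * Cg ^ 4))).add
    (iF'.const_mul 2)) (fun x => by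
      simp only [Pi.add_apply, hQ, real_inner_self_eq_norm_sq]
      have h1 : |W x * inner ℝ (u1 x) (u x)| ≤ 2 * Cg * V x * (‖u1 x‖ * ‖u x‖) := by
        rw [abs_mul]
        exact mul_le_mul (hWV x) (abs_real_inner_le_norm _ _) (abs_nonneg _)
          (by have := hV0 x; positivity)
      have h2 := (abs_le.mp h1).1
      have h3 := mul_nonneg (hV0 x) (sq_nonneg (‖u1 x‖ - Cg * ‖u x‖))
      have h4 := mul_nonneg (sq_nonneg (V x - Cg ^ 2)) (sq_nonneg ‖u x‖)
      have h5 : 0 ≤ Cg ^ 4 * ‖u x‖ ^ 2 := by positivity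
      nlinarith)
  have e1 := integral_add (iQ.add ((hone u).const_mul (2 * Cg ^ 4))) (iF'.const_mul 2)
  have e2 := integral_add iQ ((hone u).const_mul (2 * Cg ^ 4))
  rw [integral_const_mul, hF0] at e1
  rw [integral_const_mul] at e2
  rw [← hu1, ← hu2]
  simp only [Pi.add_apply] at key e1 e2
  linarith

/-- second-derivative estimate: for every Schwartz `u` and `λ ≥ 1`,
`‖u''‖² ≤ ‖Qu‖² + 2C_g⁴‖u‖²`; in particular there is `d > 0` depending only on `C_g`,
uniform in `λ`, with `‖D²u‖² ≤ d(‖Qu‖² + ‖u‖²)`. -/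
theorem second_derivative_estimate
    (g : ℝ → ℝ) (hg_smooth : ContDiff ℝ (⊤ : ℕ∞) g) (Cb : ℝ) (hg_bdd : ∀ x : ℝ, |g x| ≤ Cb)
    (Cg : ℝ) (hCg : 0 < Cg) (hg' : ∀ x : ℝ, |deriv g x| ≤ Cg * |g x|) :
    (∀ (u : SchwartzMap ℝ V4) (lam : ℝ), 1 ≤ lam →
      L2norm (fun x => deriv (deriv ⇑u) x) ^ 2 ≤
        L2norm (Qop g lam ⇑u) ^ 2 + 2 * Cg ^ 4 * L2norm ⇑u ^ 2) ∧
    ∃ d : ℝ, 0 < d ∧ ∀ (u : SchwartzMap ℝ V4) (lam : ℝ), 1 ≤ lam →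
      L2norm (fun x => Dop (Dop ⇑u) x) ^ 2 ≤
        d * (L2norm (Qop g lam ⇑u) ^ 2 + L2norm ⇑u ^ 2) := by
  have hsq : ∀ v : ℝ → V4, L2norm v ^ 2 = ∫ x, ‖v x‖ ^ 2 := fun v =>
    Real.sq_sqrt (integral_nonneg fun x => by positivity)
  have main := main_estimate g hg_smooth Cb hg_bdd Cg hCg hg'
  refine ⟨fun u lam _ => ?_, 1 + 2 * Cg ^ 4, by positivity, fun u lam _ => ?_⟩
  · simp only [hsq]
    exact main u lam
  · have hD : ∀ x, ‖Dop (Dop ⇑u) x‖ = ‖deriv (deriv ⇑u) x‖ := fun x => by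
      have : deriv (Dop ⇑u) x = (-Complex.I) • deriv (deriv ⇑u) x := by
        unfold Dop
        exact deriv_fun_const_smul_field _ _
      simp only [Dop] at this ⊢
      rw [this]
      simp [norm_smul]
    simp only [hsq, hD]
    have h := main u lam
    have hq : 0 ≤ ∫ x, ‖Qop g lam ⇑u x‖ ^ 2 := integral_nonneg fun x => by positivity
    have hu : 0 ≤ ∫ x, ‖u x‖ ^ 2 := integral_nonneg fun x => by positivity
    have := mul_nonneg (by positivity : 0 ≤ 2 * Cg ^ 4) hq
    linarith
end
end

section
/- There exists a constant c > 0 such that for every u in the Schwartz space 𝒮(ℝ, ℂ⁴) and every λ ≥ 1: ‖x²u‖ + ‖u''‖ ≤ c(‖Nu‖ + ‖u‖). In other words, multiplication by x² and the operator D² = −d²/dx² are bounded from the domain of N (with graph norm) to L²(ℝ, ℂ⁴), uniformly in λ. -/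
noncomputable section

open MeasureTheory

lemma aux_int {E : Type*} [NormedAddCommGroup E] [InnerProductSpace ℝ E]
    (a b : SchwartzMap ℝ E) (p : ℝ → ℝ) (hp : Continuous p) (C : ℝ)
    (hC : ∀ x, |p x| ≤ C * (1 + x ^ 2) ^ 2) :
    Integrable (fun x => p x * (inner ℝ (a x) (b x) : ℝ)) := by
  obtain ⟨M, hM⟩ : ∃ M, ∀ x, ‖b x‖ ≤ M := by
    obtain ⟨M, hM⟩ := b.decay 0 0
    exact ⟨M, fun x => by simpa using hM.2 x⟩
  have h0 := a.integrable_pow_mul volume 0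
  have h2 := a.integrable_pow_mul volume 2
  have h4 := a.integrable_pow_mul volume 4
  have hI := ((h0.add (h2.const_mul 2)).add h4).const_mul (C * M)
  refine hI.mono' ?_ ?_
  · exact (hp.mul (a.continuous.inner b.continuous)).aestronglyMeasurable
  · refine Filter.Eventually.of_forall fun x => ?_
    have h1 := abs_real_inner_le_norm (a x) (b x)
    have hx2 : |x| ^ 2 = x ^ 2 := sq_abs x
    have hx4 : |x| ^ 4 = x ^ 4 := by
      rw [show (4 : ℕ) = 2 * 2 from rfl, pow_mul, hx2, ← pow_mul]
    simp only [Pi.add_apply, Real.norm_eq_abs, abs_mul, pow_zero, one_mul, hx2, hx4]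
    calc |p x| * |(inner ℝ (a x) (b x) : ℝ)|
        ≤ (C * (1 + x ^ 2) ^ 2) * (‖a x‖ * M) := by
          refine mul_le_mul (hC x) (h1.trans ?_) (abs_nonneg _) ((abs_nonneg _).trans (hC x))
          exact mul_le_mul_of_nonneg_left (hM x) (norm_nonneg _)
      _ = _ := by ring

lemma aux_point {E : Type*} [NormedAddCommGroup E] [InnerProductSpace ℝ E]
    (u v w : E) (W W' K x : ℝ) (hW : x ^ 2 ≤ W) (hW' : |W'| ≤ K * W) :
    (inner ℝ w w : ℝ) + 1 / 2 * (x ^ 4 * inner ℝ u u) ≤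
      ‖-w + W • u‖ ^ 2 + K ^ 4 / 8 * inner ℝ u u
        + 2 * (W' * inner ℝ v u + W * inner ℝ v v + W * inner ℝ w u) := by
  have hW0 : 0 ≤ W := (sq_nonneg x).trans hW
  have e : ‖-w + W • u‖ ^ 2 = ‖w‖ ^ 2 - 2 * (W * inner ℝ w u) + W ^ 2 * ‖u‖ ^ 2 := by
    rw [norm_add_sq_real, norm_neg, inner_neg_left, inner_smul_right, norm_smul, mul_pow,
      Real.norm_eq_abs, sq_abs]
    ring
  rw [e]
  simp only [real_inner_self_eq_norm_sq]
  have h1 : |W' * inner ℝ v u| ≤ (K * W) * (‖v‖ * ‖u‖) := by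
    rw [abs_mul]
    exact mul_le_mul hW' (abs_real_inner_le_norm v u) (abs_nonneg _) ((abs_nonneg _).trans hW')
  have h2 := (abs_le.mp h1).1
  have h3 : 0 ≤ W * (‖v‖ - K / 2 * ‖u‖) ^ 2 := by positivity
  have h4 : 0 ≤ (W - K ^ 2 / 2) ^ 2 * ‖u‖ ^ 2 := by positivity
  have h5 : x ^ 4 * ‖u‖ ^ 2 ≤ W ^ 2 * ‖u‖ ^ 2 := by
    refine mul_le_mul_of_nonneg_right ?_ (sq_nonneg _)
    nlinarith [sq_nonneg x]
  nlinarith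

lemma aux_main_s8 {E : Type*} [NormedAddCommGroup E] [InnerProductSpace ℝ E]
    (g : ℝ → ℝ) (hg_smooth : ContDiff ℝ (⊤ : ℕ∞) g) (Cb : ℝ) (hg_bdd : ∀ x : ℝ, |g x| ≤ Cb)
    (Cg : ℝ) (hCg : 0 < Cg) (hg' : ∀ x : ℝ, |deriv g x| ≤ Cg * |g x|)
    (u : SchwartzMap ℝ E) (lam : ℝ) :
    (∫ x, ‖deriv (deriv ⇑u) x‖ ^ 2) + 1 / 2 * (∫ x : ℝ, ‖(x ^ 2 : ℝ) • u x‖ ^ 2) ≤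
      (∫ x, ‖-(deriv (deriv ⇑u) x) + (lam ^ 2 * g x ^ 2) • u x + (1 + x ^ 2) • u x‖ ^ 2)
        + (1 + 2 * Cg) ^ 4 / 8 * ∫ x, ‖u x‖ ^ 2 := by
  set v : SchwartzMap ℝ E := SchwartzMap.derivCLM ℝ E u with hv
  set w : SchwartzMap ℝ E := SchwartzMap.derivCLM ℝ E v with hw
  have ev : deriv ⇑u = ⇑v := by ext x; simp [hv]
  have ew : deriv ⇑v = ⇑w := by ext x; simp [hw]
  have du : ∀ x, HasDerivAt u (v x) x := fun x => by
    rw [← ev]; exact u.differentiableAt.hasDerivAt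
  have dv : ∀ x, HasDerivAt v (w x) x := fun x => by
    rw [← ew]; exact v.differentiableAt.hasDerivAt
  rw [ev, ew]
  have hgc : Continuous g := hg_smooth.continuous
  have hgd : Continuous (deriv g) := hg_smooth.continuous_deriv (by simp)
  have dg : ∀ x, HasDerivAt g (deriv g x) x := fun x =>
    (hg_smooth.differentiable (by simp) x).hasDerivAt
  set W : ℝ → ℝ := fun x => lam ^ 2 * g x ^ 2 + (1 + x ^ 2) with hWdef
  set W' : ℝ → ℝ := fun x => lam ^ 2 * (2 * g x * deriv g x) + 2 * x with hW'def
  have dW : ∀ x, HasDerivAt W (W' x) x := fun x => by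
    have h := (((dg x).pow 2).const_mul (lam ^ 2)).add
      (((hasDerivAt_id x).pow 2).const_add 1)
    refine (h.congr_deriv ?_)
    simp [hW'def]
  have cW : Continuous W := by fun_prop
  have cW' : Continuous W' := by fun_prop
  have Wge : ∀ x, x ^ 2 ≤ W x := fun x => by
    simp only [hWdef]; nlinarith [mul_nonneg (sq_nonneg lam) (sq_nonneg (g x))]
  have Wpos : ∀ x, 0 ≤ W x := fun x => (sq_nonneg x).trans (Wge x)
  have hW' : ∀ x, |W' x| ≤ (1 + 2 * Cg) * W x := fun x => by
    have h1 : |g x * deriv g x| ≤ Cg * g x ^ 2 := by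
      rw [abs_mul, ← sq_abs (g x)]
      nlinarith [mul_le_mul_of_nonneg_left (hg' x) (abs_nonneg (g x))]
    have h2 := mul_le_mul_of_nonneg_left h1 (sq_nonneg lam)
    have h3 : |lam ^ 2 * (2 * g x * deriv g x)| = 2 * (lam ^ 2 * |g x * deriv g x|) := by
      rw [show lam ^ 2 * (2 * g x * deriv g x) = 2 * lam ^ 2 * (g x * deriv g x) by ring, abs_mul,
        abs_of_nonneg (by positivity : 0 ≤ 2 * lam ^ 2)]
      ring
    have h4 : |2 * x| ≤ 1 + x ^ 2 := by
      rw [abs_le]; constructor <;> nlinarith [sq_nonneg (x - 1), sq_nonneg (x + 1)]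
    have h5 := abs_add_le (lam ^ 2 * (2 * g x * deriv g x)) (2 * x)
    simp only [hWdef, hW'def]
    have h6 : 0 ≤ lam ^ 2 * g x ^ 2 := by positivity
    have h7 : 0 ≤ Cg * (1 + x ^ 2) := by positivity
    nlinarith
  have Wle : ∀ x, W x ≤ (lam ^ 2 * Cb ^ 2 + 1) * (1 + x ^ 2) := fun x => by
    have h1 : g x ^ 2 ≤ Cb ^ 2 := sq_le_sq.mpr ((hg_bdd x).trans (le_abs_self _))
    have h2 := mul_le_mul_of_nonneg_left h1 (sq_nonneg lam)
    have h3 : 0 ≤ lam ^ 2 * Cb ^ 2 * x ^ 2 := by positivity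
    simp only [hWdef]
    nlinarith
  set C := lam ^ 2 * Cb ^ 2 + 1 with hC
  have C0 : 0 ≤ C := by positivity
  have one_le : ∀ x : ℝ, 1 + x ^ 2 ≤ (1 + x ^ 2) ^ 2 := fun x => by
    nlinarith [sq_nonneg x, sq_nonneg (x ^ 2)]
  have bW : ∀ x, |W x| ≤ C * (1 + x ^ 2) ^ 2 := fun x => by
    rw [abs_of_nonneg (Wpos x)]
    exact (Wle x).trans (mul_le_mul_of_nonneg_left (one_le x) C0)
  have bW' : ∀ x, |W' x| ≤ ((1 + 2 * Cg) * C) * (1 + x ^ 2) ^ 2 := fun x => by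
    have := bW x
    rw [abs_of_nonneg (Wpos x)] at this
    rw [mul_assoc]
    exact (hW' x).trans (mul_le_mul_of_nonneg_left this (by positivity))
  have bW2 : ∀ x, |W x ^ 2| ≤ C ^ 2 * (1 + x ^ 2) ^ 2 := fun x => by
    rw [abs_of_nonneg (sq_nonneg _), ← mul_pow]
    exact pow_le_pow_left₀ (Wpos x) (Wle x) 2
  have b1 : ∀ x : ℝ, |(1 : ℝ)| ≤ 1 * (1 + x ^ 2) ^ 2 := fun x => by
    rw [abs_one]; nlinarith [sq_nonneg x, sq_nonneg (x ^ 2)]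
  have b4 : ∀ x : ℝ, |x ^ 4| ≤ 1 * (1 + x ^ 2) ^ 2 := fun x => by
    rw [abs_of_nonneg (by positivity)]; nlinarith [sq_nonneg x, sq_nonneg (x ^ 2)]
  have Iww := aux_int w w (fun _ => 1) continuous_const 1 b1
  have Iuu := aux_int u u (fun _ => 1) continuous_const 1 b1
  have I4 := aux_int u u (fun x => x ^ 4) (by fun_prop) 1 b4
  have IF := aux_int v u W cW _ bW
  have IWvv := aux_int v v W cW _ bW
  have IWwu := aux_int w u W cW _ bW
  have IW'vu := aux_int v u W' cW' _ bW'
  have IW2 := aux_int u u (fun x => W x ^ 2) (by fun_prop) _ bW2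
  simp only [one_mul] at Iww Iuu
  have IN : Integrable (fun x => ‖-(w x) + W x • u x‖ ^ 2) := by
    refine ((Iww.sub (IWwu.const_mul 2)).add IW2).congr (Filter.Eventually.of_forall fun x => ?_)
    simp only [Pi.add_apply, Pi.sub_apply]
    rw [norm_add_sq_real, norm_neg, inner_neg_left, inner_smul_right, norm_smul, mul_pow,
      Real.norm_eq_abs, sq_abs, real_inner_self_eq_norm_sq, real_inner_self_eq_norm_sq]
    ring
  have IF' : Integrable (fun x => W' x * inner ℝ (v x) (u x) + W x * inner ℝ (v x) (v x)
      + W x * inner ℝ (w x) (u x)) := (IW'vu.add IWvv).add IWwu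
  have INu : Integrable (fun x => ‖-(w x) + W x • u x‖ ^ 2
      + (1 + 2 * Cg) ^ 4 / 8 * inner ℝ (u x) (u x)) :=
    IN.add (Iuu.const_mul ((1 + 2 * Cg) ^ 4 / 8))
  have hF : ∫ x, (W' x * inner ℝ (v x) (u x) + W x * inner ℝ (v x) (v x)
      + W x * inner ℝ (w x) (u x)) = 0 := by
    refine integral_eq_zero_of_hasDerivAt_of_integrable
      (f := fun x => W x * inner ℝ (v x) (u x)) (fun x => ?_) IF' IF
    refine ((dW x).mul ((dv x).inner ℝ (du x))).congr_deriv ?_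
    ring
  have key := integral_mono (Iww.add (I4.const_mul (1 / 2)))
    (INu.add (IF'.const_mul 2))
    (fun x => aux_point (u x) (v x) (w x) (W x) (W' x) (1 + 2 * Cg) x (Wge x) (hW' x))
  simp only [Pi.add_apply] at key
  rw [integral_add Iww (I4.const_mul (1 / 2)),
    integral_add INu (IF'.const_mul 2),
    integral_add IN (Iuu.const_mul ((1 + 2 * Cg) ^ 4 / 8))] at key
  simp only [integral_const_mul] at key
  rw [hF] at key
  have e1 : ∀ x : ℝ, ‖(x ^ 2 : ℝ) • u x‖ ^ 2 = x ^ 4 * inner ℝ (u x) (u x) := fun x => by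
    rw [norm_smul, mul_pow, real_inner_self_eq_norm_sq, Real.norm_eq_abs, sq_abs]; ring
  have e2 : ∀ x : ℝ, -(w x) + (lam ^ 2 * g x ^ 2) • u x + (1 + x ^ 2) • u x
      = -(w x) + W x • u x := fun x => by
    rw [hWdef, add_assoc, ← add_smul]
  simp only [e1, e2, ← real_inner_self_eq_norm_sq (w _), ← real_inner_self_eq_norm_sq (u _)]
  linarith

/-- `x²` and `D² = −d²/dx²` are bounded by the graph norm of `N`, uniformly
in `λ ≥ 1`: there is `c > 0` with `‖x²u‖ + ‖u''‖ ≤ c(‖Nu‖ + ‖u‖)` for every Schwartz `u`. -/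
theorem weights_bounded_by_N_graph_norm
    (g : ℝ → ℝ) (hg_smooth : ContDiff ℝ (⊤ : ℕ∞) g) (Cb : ℝ) (hg_bdd : ∀ x : ℝ, |g x| ≤ Cb)
    (Cg : ℝ) (hCg : 0 < Cg) (hg' : ∀ x : ℝ, |deriv g x| ≤ Cg * |g x|) :
    ∃ c : ℝ, 0 < c ∧ ∀ (u : SchwartzMap ℝ V4) (lam : ℝ), 1 ≤ lam →
      L2norm (fun x => (x ^ 2 : ℝ) • u x) + L2norm (fun x => deriv (deriv ⇑u) x) ≤
        c * (L2norm (Nop g lam ⇑u) + L2norm ⇑u) := by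
  refine ⟨3 * (1 + (1 + 2 * Cg) ^ 2), by positivity, fun u lam _ => ?_⟩
  have key := aux_main_s8 (E := V4) g hg_smooth Cb hg_bdd Cg hCg hg' u lam
  have sq : ∀ f : ℝ → V4, L2norm f ^ 2 = ∫ x, ‖f x‖ ^ 2 := fun f =>
    Real.sq_sqrt (integral_nonneg fun x => sq_nonneg _)
  have nn : ∀ f : ℝ → V4, 0 ≤ L2norm f := fun f => Real.sqrt_nonneg _
  have hA := sq (fun x => deriv (deriv ⇑u) x)
  have hB := sq (fun x => (x ^ 2 : ℝ) • u x)
  have hN := sq (Nop g lam ⇑u)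
  have hU := sq ⇑u
  have nA := nn (fun x => deriv (deriv ⇑u) x)
  have nB := nn (fun x => (x ^ 2 : ℝ) • u x)
  have nN := nn (Nop g lam ⇑u)
  have nU := nn ⇑u
  rw [← hA, ← hB, ← hU] at key
  erw [← hN] at key
  generalize L2norm (fun x => deriv (deriv ⇑u) x) = A at *
  generalize L2norm (fun x => (x ^ 2 : ℝ) • u x) = B at *
  generalize L2norm (Nop g lam ⇑u) = n at *
  generalize L2norm ⇑u = m at *
  clear hA hB hN hU
  set K := (1 + 2 * Cg) ^ 2 with hK
  have K0 : 0 ≤ K := by positivity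
  have hK4 : (1 + 2 * Cg) ^ 4 = K ^ 2 := by rw [hK]; ring
  rw [hK4] at key
  have hKm : 0 ≤ K * m := by positivity
  have a1 : A ≤ n + K * m := by
    refine abs_le_of_sq_le_sq' ?_ (by positivity) |>.2
    nlinarith [mul_nonneg nN hKm, sq_nonneg (K * m), sq_nonneg B]
  have a2 : B ≤ 2 * (n + K * m) := by
    refine abs_le_of_sq_le_sq' ?_ (by positivity) |>.2
    nlinarith [mul_nonneg nN hKm, sq_nonneg (K * m), sq_nonneg A]
  nlinarith [mul_nonneg K0 nN]
end
end

section
/- There exists a constant c > 0 (depending on S, j₋ and C_g, but uniform in λ ≥ 1) such that for every u in the Schwartz space 𝒮(ℝ, ℂ⁴): ‖A₋u‖ ≤ c‖Nu‖. -/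
noncomputable section

open MeasureTheory

/-- The coefficient `R₋(x) = j₋(x/S)² · x` of the conjugate operator at the double horizon. -/
def Rm (jm : ℝ → ℝ) (S : ℝ) (x : ℝ) : ℝ := (jm (x / S)) ^ 2 * x

/-- The conjugate operator at the double horizon, `A₋u = R₋Du − (i/2)R₋'u = ½{R₋, D}u`. -/
def Amop (jm : ℝ → ℝ) (S : ℝ) (u : ℝ → V4) : ℝ → V4 :=
  fun x => Rm jm S x • Dop u x - ((Complex.I / 2) * ((deriv (Rm jm S) x : ℝ) : ℂ)) • u x

lemma nel_integrable (p : ℝ → ℝ) (hp : Continuous p) (C : ℝ) (k : ℕ)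
    (hb : ∀ x, |p x| ≤ C * (1 + |x| ^ k)) (u v : SchwartzMap ℝ V4) :
    Integrable (fun x => p x * inner ℝ (u x) (v x)) := by
  obtain ⟨B, hB0, hB⟩ : ∃ B : ℝ, 0 ≤ B ∧ ∀ x, ‖v x‖ ≤ B := by
    obtain ⟨B, hB⟩ := v.decay 0 0
    exact ⟨B, hB.1.le, fun x => by simpa using hB.2 x⟩
  have h0 := u.integrable_pow_mul volume 0
  have hk := u.integrable_pow_mul volume k
  have hi : Integrable (fun x : ℝ => (C * B) * (‖x‖ ^ 0 * ‖u x‖ + ‖x‖ ^ k * ‖u x‖)) :=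
    (h0.add hk).const_mul _
  refine hi.mono' ?_ ?_
  · have := u.continuous
    have := v.continuous
    exact (hp.mul (by fun_prop)).aestronglyMeasurable
  · refine Filter.Eventually.of_forall fun x => ?_
    have h1 : |inner ℝ (u x) (v x)| ≤ ‖u x‖ * ‖v x‖ := abs_real_inner_le_norm _ _
    have h2 : |inner ℝ (u x) (v x)| ≤ ‖u x‖ * B :=
      h1.trans (mul_le_mul_of_nonneg_left (hB x) (norm_nonneg _))
    rw [Real.norm_eq_abs, abs_mul]
    calc |p x| * |inner ℝ (u x) (v x)| ≤ (C * (1 + |x| ^ k)) * (‖u x‖ * B) :=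
          mul_le_mul (hb x) h2 (abs_nonneg _) ((abs_nonneg _).trans (hb x))
      _ = _ := by rw [Real.norm_eq_abs]; ring

lemma nel_deriv_bdd (S : ℝ) (hS : 1 ≤ S)
    (jm : ℝ → ℝ) (hjm_smooth : ContDiff ℝ (⊤ : ℕ∞) jm)
    (hjm_one : ∀ t : ℝ, t ≤ -2 → jm t = 1)
    (hjm_zero : ∀ t : ℝ, -(3 / 2 : ℝ) ≤ t → jm t = 0) :
    ∃ B : ℝ, ∀ x, |deriv (Rm jm S) x| ≤ B := by
  have hS0 : 0 < S := by linarith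
  have hR : ContDiff ℝ (⊤ : ℕ∞) (Rm jm S) := by
    unfold Rm
    exact ((hjm_smooth.comp (contDiff_id.div_const S)).pow 2).mul contDiff_id
  have hc : Continuous (deriv (Rm jm S)) := hR.continuous_deriv (by simp)
  obtain ⟨M, hM⟩ := (isCompact_Icc (a := -2 * S) (b := -(3/2) * S)).exists_bound_of_continuousOn
    hc.continuousOn
  refine ⟨max M 1, fun x => ?_⟩
  by_cases h1 : x < -2 * S
  · have : Rm jm S =ᶠ[nhds x] fun y => y := by
      filter_upwards [Iio_mem_nhds h1] with y hy
      have : y / S ≤ -2 := by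
        rw [div_le_iff₀ hS0]; exact le_of_lt hy
      simp [Rm, hjm_one _ this]
    rw [this.deriv_eq]; simp
  by_cases h2 : -(3/2) * S < x
  · have : Rm jm S =ᶠ[nhds x] fun y => 0 := by
      filter_upwards [Ioi_mem_nhds h2] with y hy
      have : -(3/2) ≤ y / S := by
        rw [le_div_iff₀ hS0]; exact le_of_lt hy
      simp [Rm, hjm_zero _ this]
    rw [this.deriv_eq]; simp
  · exact (hM x ⟨not_lt.1 h1, not_lt.1 h2⟩).trans (le_max_left _ _)

lemma nel_Am_bound (jm : ℝ → ℝ) (S B : ℝ) (hjm_range : ∀ t : ℝ, jm t ∈ Set.Icc (0 : ℝ) 1)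
    (hB : ∀ x, |deriv (Rm jm S) x| ≤ B) (u : ℝ → V4) (x : ℝ) :
    ‖Amop jm S u x‖ ^ 2 ≤ (2 + B ^ 2) * (x ^ 2 * ‖deriv u x‖ ^ 2 + 1 / 2 * ‖u x‖ ^ 2) := by
  have h1 : ‖Amop jm S u x‖ ≤ |x| * ‖deriv u x‖ + B / 2 * ‖u x‖ := by
    unfold Amop Dop
    refine (norm_sub_le _ _).trans ?_
    rw [norm_smul, norm_smul, norm_smul]
    have hR : ‖Rm jm S x‖ ≤ |x| := by
      unfold Rm
      rw [Real.norm_eq_abs, abs_mul]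
      have := hjm_range (x / S)
      have h : |jm (x / S) ^ 2| ≤ 1 := by
        rw [abs_of_nonneg (sq_nonneg _)]
        exact pow_le_one₀ this.1 this.2
      exact mul_le_of_le_one_left (abs_nonneg _) h
    have h2 : ‖(Complex.I / 2) * ((deriv (Rm jm S) x : ℝ) : ℂ)‖ ≤ B / 2 := by
      rw [norm_mul, norm_div, Complex.norm_I, Complex.norm_real, Real.norm_eq_abs]
      have := hB x
      simp
      linarith
    have h3 : ‖-Complex.I‖ = 1 := by simp
    rw [h3, one_mul]
    gcongr
  have hx : x ^ 2 = |x| ^ 2 := (sq_abs x).symm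
  rw [hx]
  have h4 := pow_le_pow_left₀ (norm_nonneg _) h1 2
  refine h4.trans ?_
  nlinarith [sq_nonneg (|x| * ‖deriv u x‖ - B / 2 * ‖u x‖), sq_nonneg (‖u x‖),
    sq_nonneg (B * (|x| * ‖deriv u x‖))]

lemma nel_core (g : ℝ → ℝ) (hg : Continuous g) (Cb : ℝ) (hg_bdd : ∀ x : ℝ, |g x| ≤ Cb)
    (u : SchwartzMap ℝ V4) (lam : ℝ) (f : ℝ → ℝ) (hf0 : ∀ x, 0 ≤ f x) (K : ℝ) (hK : 0 ≤ K)
    (hf : ∀ x, f x ≤ K * (x ^ 2 * ‖deriv u x‖ ^ 2 + 1 / 2 * ‖u x‖ ^ 2)) :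
    ∫ x, f x ≤ 2 * K * ∫ x, ‖Nop g lam u x‖ ^ 2 := by
  set u1 : SchwartzMap ℝ V4 := SchwartzMap.derivCLM ℝ V4 u with hu1
  set u2 : SchwartzMap ℝ V4 := SchwartzMap.derivCLM ℝ V4 u1 with hu2
  have e1 : deriv u = u1 := by ext1 x; simp [hu1]
  have e2 : deriv u1 = u2 := by ext1 x; simp [hu2]
  have d0 : ∀ x, HasDerivAt u (u1 x) x := fun x => by
    rw [← e1]; exact u.differentiableAt.hasDerivAt
  have d1 : ∀ x, HasDerivAt u1 (u2 x) x := fun x => by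
    rw [← e2]; exact u1.differentiableAt.hasDerivAt
  set W : ℝ → ℝ := fun x => lam ^ 2 * g x ^ 2 + (1 + x ^ 2) with hW
  have hWc : Continuous W := by fun_prop
  have hW1 : ∀ x, 1 + x ^ 2 ≤ W x := fun x => by
    simp only [hW]; nlinarith [sq_nonneg (lam * g x)]
  have hN : ∀ x, Nop g lam u x = W x • u x - u2 x := fun x => by
    simp only [Nop, Qop, e1, e2, hW, add_smul]; abel
  have hWb : ∀ x, W x ≤ (lam ^ 2 * Cb ^ 2 + 1) * (1 + x ^ 2) := fun x => by
    have : g x ^ 2 ≤ Cb ^ 2 := by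
      rw [← sq_abs]; exact pow_le_pow_left₀ (abs_nonneg _) (hg_bdd x) 2
    have h2 := mul_le_mul_of_nonneg_left this (sq_nonneg lam)
    simp only [hW]
    nlinarith [mul_nonneg (mul_nonneg (sq_nonneg lam) (sq_nonneg Cb)) (sq_nonneg x)]
  have hW0 : ∀ x, 0 ≤ W x := fun x => le_trans (by positivity) (hW1 x)
  have hσ : ∀ x : ℝ, |2 + x ^ 2| ≤ 2 * (1 + |x| ^ 2) := fun x => by
    rw [sq_abs, abs_of_nonneg (by positivity)]; nlinarith [sq_nonneg x]
  have hx1 : ∀ x : ℝ, |x| ≤ 1 * (1 + |x| ^ 1) := fun x => by simp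
  have h11 : ∀ x : ℝ, |(1:ℝ)| ≤ 1 * (1 + |x| ^ 0) := fun x => by simp
  -- N is square integrable
  have iN : Integrable (fun x => ‖Nop g lam u x‖ ^ 2) := by
    have a := nel_integrable (fun x => W x ^ 2) (hWc.pow 2) ((lam ^ 2 * Cb ^ 2 + 1) ^ 2 * 2) 4
      (fun x => by
        rw [abs_of_nonneg (sq_nonneg _)]
        have h := pow_le_pow_left₀ (hW0 x) (hWb x) 2
        have e : |x| ^ 4 = x ^ 4 := by
          rw [show (4:ℕ) = 2 * 2 from rfl, pow_mul, pow_mul, sq_abs]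
        rw [e]
        refine h.trans ?_
        rw [mul_pow, mul_assoc]
        refine mul_le_mul_of_nonneg_left ?_ (sq_nonneg _)
        nlinarith [sq_nonneg (x ^ 2 - 1)]) u u
    have b := nel_integrable (fun x => W x) hWc (lam ^ 2 * Cb ^ 2 + 1) 2
      (fun x => by rw [abs_of_nonneg (hW0 x), sq_abs]; exact hWb x) u u2
    have c := nel_integrable (fun _ => 1) continuous_const 1 0 h11 u2 u2
    refine ((a.sub (b.const_mul 2)).add c).congr (Filter.Eventually.of_forall fun x => ?_)
    simp only [Pi.add_apply, Pi.sub_apply]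
    rw [hN, ← real_inner_self_eq_norm_sq (W x • u x - u2 x), inner_sub_left, inner_sub_right,
      inner_sub_right, real_inner_smul_left, real_inner_smul_right, real_inner_smul_left,
      real_inner_smul_right, real_inner_comm (u x) (u2 x)]
    ring
  set F : ℝ → ℝ := fun x => (2 + x ^ 2) * inner ℝ (u x) (u1 x) - x * inner ℝ (u x) (u x) with hF
  set F' : ℝ → ℝ := fun x => (2 + x ^ 2) * inner ℝ (u1 x) (u1 x)
    + (2 + x ^ 2) * inner ℝ (u x) (u2 x) - 1 * inner ℝ (u x) (u x) with hF'
  have cσ : Continuous (fun x : ℝ => 2 + x ^ 2) := by fun_prop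
  have iF : Integrable F :=
    (nel_integrable _ cσ 2 2 hσ u u1).sub (nel_integrable _ continuous_id 1 1 hx1 u u)
  have iF' : Integrable F' :=
    ((nel_integrable _ cσ 2 2 hσ u1 u1).add (nel_integrable _ cσ 2 2 hσ u u2)).sub
      (nel_integrable (fun _ => 1) continuous_const 1 0 h11 u u)
  have dF : ∀ x, HasDerivAt F (F' x) x := fun x => by
    have s : HasDerivAt (fun x : ℝ => 2 + x ^ 2) (2 * x) x := by
      simpa using (hasDerivAt_pow 2 x).const_add 2
    have := (s.mul ((d0 x).inner ℝ (d1 x))).sub ((hasDerivAt_id x).mul ((d0 x).inner ℝ (d0 x)))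
    refine this.congr_deriv ?_
    simp only [hF', id]
    rw [real_inner_comm (u x) (u1 x)]
    ring
  have zF : ∫ x, F' x = 0 := integral_eq_zero_of_hasDerivAt_of_integrable dF iF' iF
  have key : ∀ x, f x ≤ K * (F' x + 2 * ‖Nop g lam u x‖ ^ 2) := fun x => by
    refine (hf x).trans (mul_le_mul_of_nonneg_left ?_ hK)
    rw [e1]
    have hu2' : u2 x = W x • u x - Nop g lam u x := by rw [hN]; abel
    have hin : |inner ℝ (u x) (Nop g lam u x)| ≤ ‖u x‖ * ‖Nop g lam u x‖ :=
      abs_real_inner_le_norm _ _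
    have hin' := (le_abs_self _).trans hin
    simp only [hF']
    rw [hu2', inner_sub_right, real_inner_smul_right, real_inner_self_eq_norm_sq,
      real_inner_self_eq_norm_sq]
    set t := inner ℝ (u x) (Nop g lam u x)
    set a := ‖u x‖
    set n := ‖Nop g lam u x‖
    set b := ‖u1 x‖
    have hs : 0 ≤ 2 + x ^ 2 := by positivity
    have k1 := mul_le_mul_of_nonneg_left hin' hs
    have k2 : (2 + x ^ 2) * (1 + x ^ 2) * a ^ 2 ≤ (2 + x ^ 2) * W x * a ^ 2 := by
      have := hW1 x
      gcongr
    have k3 : (2 + x ^ 2) * (a * n) ≤ (2 + x ^ 2) ^ 2 * a ^ 2 / 8 + 2 * n ^ 2 := by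
      nlinarith [sq_nonneg ((2 + x ^ 2) * a - 4 * n)]
    have k4 : 0 ≤ (5 / 2 * x ^ 2 + 7 / 8 * x ^ 4) * a ^ 2 := by positivity
    nlinarith [sq_nonneg b]
  have iG : Integrable (fun x => K * (F' x + 2 * ‖Nop g lam u x‖ ^ 2)) :=
    (iF'.add (iN.const_mul 2)).const_mul K
  calc ∫ x, f x ≤ ∫ x, K * (F' x + 2 * ‖Nop g lam u x‖ ^ 2) :=
        integral_mono_of_nonneg (Filter.Eventually.of_forall hf0) iG
          (Filter.Eventually.of_forall key)
    _ = 2 * K * ∫ x, ‖Nop g lam u x‖ ^ 2 := by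
        rw [integral_const_mul, integral_add iF' (iN.const_mul 2), zF, integral_const_mul]
        ring

/-- first Nelson hypothesis for `(A₋, N)`: there is `c > 0` (depending on
`S`, `j₋`, `C_g` but uniform in `λ ≥ 1`) such that `‖A₋u‖ ≤ c‖Nu‖` for every Schwartz `u`. -/
theorem nelson_first_hypothesis_Aminus
    (g : ℝ → ℝ) (hg_smooth : ContDiff ℝ (⊤ : ℕ∞) g) (Cb : ℝ) (hg_bdd : ∀ x : ℝ, |g x| ≤ Cb)
    (Cg : ℝ) (hCg : 0 < Cg) (hg' : ∀ x : ℝ, |deriv g x| ≤ Cg * |g x|)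
    (S : ℝ) (hS : 1 ≤ S)
    (jm : ℝ → ℝ) (hjm_smooth : ContDiff ℝ (⊤ : ℕ∞) jm)
    (hjm_range : ∀ t : ℝ, jm t ∈ Set.Icc (0 : ℝ) 1)
    (hjm_one : ∀ t : ℝ, t ≤ -2 → jm t = 1)
    (hjm_zero : ∀ t : ℝ, -(3 / 2 : ℝ) ≤ t → jm t = 0) :
    ∃ c : ℝ, 0 < c ∧ ∀ (u : SchwartzMap ℝ V4) (lam : ℝ), 1 ≤ lam →
      L2norm (Amop jm S ⇑u) ≤ c * L2norm (Nop g lam ⇑u) := by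
  obtain ⟨B, hB⟩ := nel_deriv_bdd S hS jm hjm_smooth hjm_one hjm_zero
  have hK : (0:ℝ) < 2 * (2 + B ^ 2) := by positivity
  refine ⟨Real.sqrt (2 * (2 + B ^ 2)), Real.sqrt_pos.2 hK, fun u lam _ => ?_⟩
  unfold L2norm
  rw [← Real.sqrt_mul hK.le]
  exact Real.sqrt_le_sqrt (nel_core g hg_smooth.continuous Cb hg_bdd u lam _
    (fun x => sq_nonneg _) (2 + B ^ 2) (by positivity)
    (nel_Am_bound jm S B hjm_range hB u))
end
end

section
/- Assume in addition that |x·g'(x)| ≤ C₂|g(x)| for all x ≤ −3/2, for some constant C₂ > 0. Then there exists a constant d > 0, uniform in λ ≥ 1, such that for every u in the Schwartz space 𝒮(ℝ, ℂ⁴): |⟨Nu, A₋u⟩ − ⟨A₋u, Nu⟩| ≤ d·⟨Nu, u⟩. -/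
noncomputable section

open MeasureTheory

/-- Rapidly decaying continuous functions. -/
def RD {E : Type*} [NormedAddCommGroup E] (f : ℝ → E) : Prop :=
  Continuous f ∧ ∀ k : ℕ, ∃ C : ℝ, ∀ x : ℝ, (1 + x ^ 2) ^ k * ‖f x‖ ≤ C

/-- Polynomially bounded continuous functions. -/
def PB (c : ℝ → ℝ) : Prop :=
  Continuous c ∧ ∃ (k : ℕ) (C : ℝ), ∀ x : ℝ, |c x| ≤ C * (1 + x ^ 2) ^ k

theorem one_le_wt (x : ℝ) (k : ℕ) : 1 ≤ (1 + x ^ 2) ^ k :=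
  one_le_pow₀ (by nlinarith [sq_nonneg x])

theorem PB.of_bdd {c : ℝ → ℝ} (hc : Continuous c) (C : ℝ) (h : ∀ x, |c x| ≤ C) : PB c :=
  ⟨hc, 0, C, fun x => by simpa using h x⟩

theorem PB.const (a : ℝ) : PB (fun _ => a) := PB.of_bdd continuous_const |a| (fun _ => le_rfl)

theorem PB.mul {c e : ℝ → ℝ} (hc : PB c) (he : PB e) : PB (fun x => c x * e x) := by
  obtain ⟨h1, k, C, hC⟩ := hc
  obtain ⟨h2, l, K, hK⟩ := he
  refine ⟨h1.mul h2, k + l, C * K, fun x => ?_⟩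
  rw [abs_mul, pow_add]
  calc |c x| * |e x| ≤ (C * (1 + x ^ 2) ^ k) * (K * (1 + x ^ 2) ^ l) :=
        mul_le_mul (hC x) (hK x) (abs_nonneg _) ((abs_nonneg _).trans (hC x))
    _ = _ := by ring

theorem PB.add {c e : ℝ → ℝ} (hc : PB c) (he : PB e) : PB (fun x => c x + e x) := by
  obtain ⟨h1, k, C, hC⟩ := hc
  obtain ⟨h2, l, K, hK⟩ := he
  refine ⟨h1.add h2, k + l, |C| + |K|, fun x => ?_⟩
  have a1 := one_le_wt x k
  have a2 := one_le_wt x l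
  rw [pow_add]
  set p := (1 + x ^ 2) ^ k
  set q := (1 + x ^ 2) ^ l
  have b1 : C * p ≤ |C| * (p * q) := by
    have : C * p ≤ |C| * p := mul_le_mul_of_nonneg_right (le_abs_self C) (by linarith)
    have : |C| * p ≤ |C| * (p * q) :=
      mul_le_mul_of_nonneg_left (by nlinarith) (abs_nonneg C)
    linarith
  have b2 : K * q ≤ |K| * (p * q) := by
    have : K * q ≤ |K| * q := mul_le_mul_of_nonneg_right (le_abs_self K) (by linarith)
    have : |K| * q ≤ |K| * (p * q) :=
      mul_le_mul_of_nonneg_left (by nlinarith) (abs_nonneg K)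
    linarith
  have := abs_add_le (c x) (e x)
  have := hC x
  have := hK x
  linarith

theorem PB.id : PB (fun x => x) := by
  refine ⟨continuous_id, 1, 1, fun x => ?_⟩
  rw [pow_one, one_mul, abs_le]
  constructor <;> nlinarith [sq_nonneg (x - 1), sq_nonneg (x + 1)]

section
variable {E : Type*} [NormedAddCommGroup E]

theorem RD.add {f h : ℝ → E} (hf : RD f) (hh : RD h) : RD (fun x => f x + h x) := by
  refine ⟨hf.1.add hh.1, fun k => ?_⟩
  obtain ⟨C, hC⟩ := hf.2 k
  obtain ⟨K, hK⟩ := hh.2 k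
  refine ⟨C + K, fun x => ?_⟩
  have a1 := one_le_wt x k
  calc _ ≤ (1 + x ^ 2) ^ k * (‖f x‖ + ‖h x‖) :=
        mul_le_mul_of_nonneg_left (norm_add_le _ _) (by linarith)
    _ ≤ _ := by rw [mul_add]; exact add_le_add (hC x) (hK x)

theorem RD.neg {f : ℝ → E} (hf : RD f) : RD (fun x => - f x) := by
  refine ⟨hf.1.neg, fun k => ?_⟩
  simpa using hf.2 k

theorem RD.sub {f h : ℝ → E} (hf : RD f) (hh : RD h) : RD (fun x => f x - h x) := by
  simpa [sub_eq_add_neg] using hf.add hh.neg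

theorem RD.smul [NormedSpace ℝ E] {c : ℝ → ℝ} {f : ℝ → E} (hc : PB c) (hf : RD f) :
    RD (fun x => c x • f x) := by
  obtain ⟨h1, l, C, hC⟩ := hc
  refine ⟨h1.smul hf.1, fun k => ?_⟩
  obtain ⟨K, hK⟩ := hf.2 (k + l)
  refine ⟨|C| * K, fun x => ?_⟩
  have a1 := one_le_wt x k
  have a2 := one_le_wt x l
  rw [norm_smul, Real.norm_eq_abs]
  have : |c x| ≤ |C| * (1 + x ^ 2) ^ l :=
    (hC x).trans (mul_le_mul_of_nonneg_right (le_abs_self C) (by linarith))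
  calc _ ≤ (1 + x ^ 2) ^ k * ((|C| * (1 + x ^ 2) ^ l) * ‖f x‖) := by gcongr
    _ = |C| * ((1 + x ^ 2) ^ (k + l) * ‖f x‖) := by rw [pow_add]; ring
    _ ≤ _ := mul_le_mul_of_nonneg_left (hK x) (abs_nonneg C)

theorem RD.csmul [NormedSpace ℂ E] (a : ℂ) {f : ℝ → E} (hf : RD f) :
    RD (fun x => a • f x) := by
  refine ⟨hf.1.const_smul a, fun k => ?_⟩
  obtain ⟨K, hK⟩ := hf.2 k
  refine ⟨‖a‖ * K, fun x => ?_⟩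
  rw [norm_smul]
  calc _ = ‖a‖ * ((1 + x ^ 2) ^ k * ‖f x‖) := by ring
    _ ≤ _ := mul_le_mul_of_nonneg_left (hK x) (norm_nonneg a)

theorem RD.integrable {f : ℝ → E} (hf : RD f) : Integrable f := by
  obtain ⟨C, hC⟩ := hf.2 1
  refine Integrable.mono' (integrable_inv_one_add_sq.const_mul C) hf.1.aestronglyMeasurable
    (Filter.Eventually.of_forall fun x => ?_)
  have h0 : 0 < 1 + x ^ 2 := by positivity
  rw [← div_eq_mul_inv, le_div_iff₀ h0]
  have := hC x
  rw [pow_one] at this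
  linarith

end

theorem RD.inner {f h : ℝ → V4} (hf : RD f) (hh : RD h) :
    RD (fun x => (inner ℂ (f x) (h x) : ℂ)) := by
  refine ⟨hf.1.inner hh.1, fun k => ?_⟩
  obtain ⟨C, hC⟩ := hf.2 k
  obtain ⟨K, hK⟩ := hh.2 0
  refine ⟨C * K, fun x => ?_⟩
  have a1 := one_le_wt x k
  have h2 := hK x
  rw [pow_zero, one_mul] at h2
  calc _ ≤ (1 + x ^ 2) ^ k * (‖f x‖ * ‖h x‖) :=
        mul_le_mul_of_nonneg_left (norm_inner_le_norm _ _) (by linarith)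
    _ = ((1 + x ^ 2) ^ k * ‖f x‖) * ‖h x‖ := by ring
    _ ≤ _ := mul_le_mul (hC x) h2 (norm_nonneg _) (le_trans (by positivity) (hC x))

/-- real part of the pointwise inner product -/
def ip (v w : V4) : ℝ := (inner ℂ v w : ℂ).re

theorem RD.ip {f h : ℝ → V4} (hf : RD f) (hh : RD h) : RD (fun x => ip (f x) (h x)) := by
  have := hf.inner hh
  refine ⟨Complex.continuous_re.comp this.1, fun k => ?_⟩
  obtain ⟨C, hC⟩ := this.2 k
  refine ⟨C, fun x => le_trans ?_ (hC x)⟩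
  have a1 := one_le_wt x k
  exact mul_le_mul_of_nonneg_left (Complex.abs_re_le_norm _) (by linarith)

theorem ip_comm (v w : V4) : ip v w = ip w v := by
  unfold ip
  rw [← inner_conj_symm, Complex.conj_re]

theorem ip_self (v : V4) : 0 ≤ ip v v := by
  unfold ip
  exact inner_self_nonneg (𝕜 := ℂ) (x := v)

theorem ip_deriv {f h : ℝ → V4} {f' h' : V4} {x : ℝ} (hf : HasDerivAt f f' x)
    (hh : HasDerivAt h h' x) :
    HasDerivAt (fun x => ip (f x) (h x)) (ip (f x) h' + ip f' (h x)) x := by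
  have := Complex.reCLM.hasFDerivAt.comp_hasDerivAt x (hf.inner ℂ hh)
  simpa [ip, Function.comp_def] using this

theorem schwartz_RD (u : SchwartzMap ℝ V4) : RD ⇑u := by
  refine ⟨u.continuous, fun k => ?_⟩
  obtain ⟨C, hC⟩ := u.decay 0 0
  obtain ⟨K, hK⟩ := u.decay (2 * k) 0
  refine ⟨2 ^ (k - 1) * (C + K), fun x => ?_⟩
  have h1 := hC.2 x
  have h2 := hK.2 x
  simp only [norm_iteratedFDeriv_zero, pow_zero, one_mul, Real.norm_eq_abs, pow_mul, sq_abs] at h1 h2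
  have h3 : (1 + x ^ 2) ^ k ≤ 2 ^ (k - 1) * (1 ^ k + (x ^ 2) ^ k) :=
    add_pow_le zero_le_one (sq_nonneg x) k
  calc _ ≤ (2 ^ (k - 1) * (1 ^ k + (x ^ 2) ^ k)) * ‖u x‖ := by gcongr
    _ = 2 ^ (k - 1) * (‖u x‖ + (x ^ 2) ^ k * ‖u x‖) := by rw [one_pow]; ring
    _ ≤ _ := by gcongr

theorem schwartz_deriv (u : SchwartzMap ℝ V4) : ∃ v : SchwartzMap ℝ V4, ⇑v = deriv ⇑u :=
  ⟨SchwartzMap.derivCLM ℝ V4 u, by ext1 x; simp⟩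

theorem bdd_of_const_ends {f : ℝ → ℝ} (hf : Continuous f) (a b c e : ℝ)
    (ha : ∀ x, x < a → f x = c) (hb : ∀ x, b < x → f x = e) : ∃ K, ∀ x, |f x| ≤ K := by
  obtain ⟨K, hK⟩ := isCompact_Icc.exists_bound_of_continuousOn (s := Set.Icc a b) hf.continuousOn
  refine ⟨max K (max |c| |e|), fun x => ?_⟩
  by_cases h1 : x < a
  · rw [ha x h1]; simp
  by_cases h2 : b < x
  · rw [hb x h2]; simp
  exact (hK x ⟨not_lt.1 h1, not_lt.1 h2⟩).trans (le_max_left _ _)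

theorem deriv_ends {f : ℝ → ℝ} (a b c e : ℝ)
    (ha : ∀ x, x < a → f x = c) (hb : ∀ x, b < x → f x = e) :
    (∀ x, x < a → deriv f x = 0) ∧ (∀ x, b < x → deriv f x = 0) := by
  constructor
  · intro x hx
    have : f =ᶠ[nhds x] fun _ => c := by
      filter_upwards [Iio_mem_nhds hx] with y hy using ha y hy
    rw [this.deriv_eq]; simp
  · intro x hx
    have : f =ᶠ[nhds x] fun _ => e := by
      filter_upwards [Ioi_mem_nhds hx] with y hy using hb y hy
    rw [this.deriv_eq]; simp

theorem im_ptwise (w r r1 : ℝ) (u0 u1 u2 : V4) :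
    (inner ℂ (-u2 + w • u0) (r • ((-Complex.I) • u1) - ((Complex.I / 2) * (r1 : ℂ)) • u0) : ℂ).im
      = r * ip u2 u1 - w * r * ip u0 u1 + r1 / 2 * ip u2 u0 - w * r1 / 2 * ip u0 u0 := by
  simp only [RCLike.real_smul_eq_coe_smul (K := ℂ), inner_add_left, inner_sub_right, inner_neg_left,
    inner_smul_left, inner_smul_right, ip]
  simp
  ring

theorem re_ptwise (w : ℝ) (u0 u2 : V4) :
    (inner ℂ (-u2 + w • u0) u0 : ℂ).re = - ip u2 u0 + w * ip u0 u0 := by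
  simp only [RCLike.real_smul_eq_coe_smul (K := ℂ), inner_add_left, inner_neg_left,
    inner_smul_left, ip]
  simp

/-- The abstract commutator estimate. -/
theorem core_bound (W W' R R1 R2 R3 : ℝ → ℝ) (K M : ℝ) (hM : 0 ≤ M)
    (hW : PB W) (hW' : PB W') (hR : PB R) (hR1 : PB R1) (hR2 : PB R2) (hR3 : PB R3)
    (dW : ∀ x, HasDerivAt W (W' x) x) (dR : ∀ x, HasDerivAt R (R1 x) x)
    (dR1 : ∀ x, HasDerivAt R1 (R2 x) x) (dR2 : ∀ x, HasDerivAt R2 (R3 x) x)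
    (b1 : ∀ x, |R1 x| ≤ K) (b3 : ∀ x, |R3 x| ≤ K) (hW1 : ∀ x, 1 ≤ W x)
    (bW : ∀ x, |W' x * R x| ≤ M * W x)
    (u0 u1 u2 : ℝ → V4) (h0 : RD u0) (h1 : RD u1) (h2 : RD u2)
    (d0 : ∀ x, HasDerivAt u0 (u1 x) x) (d1 : ∀ x, HasDerivAt u1 (u2 x) x) :
    |∫ x, (R x * ip (u2 x) (u1 x) - W x * R x * ip (u0 x) (u1 x) + R1 x / 2 * ip (u2 x) (u0 x)
        - W x * R1 x / 2 * ip (u0 x) (u0 x))| ≤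
      (2 * K + M) * ∫ x, (- ip (u2 x) (u0 x) + W x * ip (u0 x) (u0 x)) := by
  have hK : 0 ≤ K := (abs_nonneg _).trans (b1 0)
  have p00 := h0.ip h0
  have p01 := h0.ip h1
  have p11 := h1.ip h1
  have p20 := h2.ip h0
  have p21 := h2.ip h1
  have hh : PB (fun _ => (1 / 2 : ℝ)) := PB.const _
  have hq : PB (fun _ => (1 / 4 : ℝ)) := PB.const _
  -- the flux
  set F : ℝ → ℝ := fun x => (1 / 2 * R x) * ip (u1 x) (u1 x) + (1 / 2 * R1 x) * ip (u0 x) (u1 x)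
    - (1 / 4 * R2 x) * ip (u0 x) (u0 x) - (1 / 2 * (W x * R x)) * ip (u0 x) (u0 x) with hF
  have F_rd : RD F := by
    have a := RD.smul (hh.mul hR) p11
    have b := RD.smul (hh.mul hR1) p01
    have c := RD.smul (hq.mul hR2) p00
    have e := RD.smul (hh.mul (hW.mul hR)) p00
    exact ((a.add b).sub c).sub e
  set I : ℝ → ℝ := fun x => R x * ip (u2 x) (u1 x) - W x * R x * ip (u0 x) (u1 x)
    + R1 x / 2 * ip (u2 x) (u0 x) - W x * R1 x / 2 * ip (u0 x) (u0 x) with hI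
  have I_rd : RD I := by
    have a := RD.smul hR p21
    have b := RD.smul (hW.mul hR) p01
    have c := RD.smul (hR1.mul hh) p20
    have e := RD.smul ((hW.mul hR1).mul hh) p00
    have := ((a.sub b).add c).sub e
    convert this using 2 with x
    simp only [hI, smul_eq_mul]; ring
  set J : ℝ → ℝ := fun x => - (R1 x * ip (u1 x) (u1 x)) + (1 / 4 * R3 x) * ip (u0 x) (u0 x)
    + (1 / 2 * (W' x * R x)) * ip (u0 x) (u0 x) with hJ
  have J_rd : RD J := by
    have a := RD.smul hR1 p11
    have b := RD.smul (hq.mul hR3) p00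
    have c := RD.smul (hh.mul (hW'.mul hR)) p00
    exact (a.neg.add b).add c
  have dF : ∀ x, HasDerivAt F (I x - J x) x := by
    intro x
    have e00 := ip_deriv (d0 x) (d0 x)
    have e01 := ip_deriv (d0 x) (d1 x)
    have e11 := ip_deriv (d1 x) (d1 x)
    have := (((((dR x).const_mul (1 / 2)).mul e11).add (((dR1 x).const_mul (1 / 2)).mul e01)).sub
      (((dR2 x).const_mul (1 / 4)).mul e00)).sub ((((dW x).mul (dR x)).const_mul (1 / 2)).mul e00)
    refine this.congr_deriv ?_
    simp only [hI, hJ, Pi.mul_apply]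
    rw [ip_comm (u1 x) (u2 x), ip_comm (u1 x) (u0 x), ip_comm (u0 x) (u2 x)]
    ring
  have intF : ∫ x, (I x - J x) = 0 :=
    integral_eq_zero_of_hasDerivAt_of_integrable dF (I_rd.sub J_rd).integrable F_rd.integrable
  have IJ : ∫ x, I x = ∫ x, J x := by
    rw [integral_sub I_rd.integrable J_rd.integrable] at intF
    linarith
  -- the energy
  set P : ℝ → ℝ := fun x => ip (u1 x) (u1 x) + W x * ip (u0 x) (u0 x) with hP
  have P_rd : RD P := p11.add (RD.smul hW p00)
  set Z : ℝ → ℝ := fun x => - ip (u2 x) (u0 x) + W x * ip (u0 x) (u0 x) with hZ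
  have Z_rd : RD Z := p20.neg.add (RD.smul hW p00)
  have intG : ∫ x, (P x - Z x) = 0 := by
    refine integral_eq_zero_of_hasDerivAt_of_integrable (f := fun x => ip (u0 x) (u1 x))
      (fun x => ?_) (P_rd.sub Z_rd).integrable p01.integrable
    refine (ip_deriv (d0 x) (d1 x)).congr_deriv ?_
    simp only [hP, hZ]
    rw [ip_comm (u0 x) (u2 x)]
    ring
  have PZ : ∫ x, Z x = ∫ x, P x := by
    rw [integral_sub P_rd.integrable Z_rd.integrable] at intG
    linarith
  rw [IJ, PZ, ← integral_const_mul, ← Real.norm_eq_abs]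
  refine norm_integral_le_of_norm_le (P_rd.integrable.const_mul _)
    (Filter.Eventually.of_forall fun x => ?_)
  rw [Real.norm_eq_abs]
  have i1 := ip_self (u1 x)
  have i0 := ip_self (u0 x)
  simp only [hJ, hP]
  generalize ip (u1 x) (u1 x) = α at *
  generalize ip (u0 x) (u0 x) = β at *
  obtain ⟨c1, c2⟩ := abs_le.1 (b1 x)
  obtain ⟨c3, c4⟩ := abs_le.1 (b3 x)
  obtain ⟨c5, c6⟩ := abs_le.1 (bW x)
  have w1 := hW1 x
  generalize W' x * R x = ω at *
  have k1 : K ≤ K * W x := by nlinarith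
  have m1 : 0 ≤ M * W x := by nlinarith
  have n0 : 0 ≤ (K * W x - K) * β := mul_nonneg (by linarith) i0
  have n0' : 0 ≤ K * β := mul_nonneg hK i0
  have n0'' : 0 ≤ K * α := mul_nonneg hK i1
  have n1 : 0 ≤ (K - R1 x) * α := mul_nonneg (by linarith) i1
  have n2 : 0 ≤ (K + R1 x) * α := mul_nonneg (by linarith) i1
  have n3 : 0 ≤ (K - R3 x) * β := mul_nonneg (by linarith) i0
  have n4 : 0 ≤ (K + R3 x) * β := mul_nonneg (by linarith) i0
  have n5 : 0 ≤ (M * W x - ω) * β := mul_nonneg (by linarith) i0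
  have n6 : 0 ≤ (M * W x + ω) * β := mul_nonneg (by linarith) i0
  have n7 : 0 ≤ M * α := mul_nonneg hM i1
  have n8 : 0 ≤ (M * W x) * β := mul_nonneg m1 i0
  rw [abs_le]
  constructor <;> nlinarith

/-- second Nelson hypothesis (commutator bound) for `(A₋, N)`: assuming in
addition `|x·g'(x)| ≤ C₂|g(x)|` for `x ≤ −3/2`, there is `d > 0` uniform in `λ ≥ 1` with
`|⟨Nu, A₋u⟩ − ⟨A₋u, Nu⟩| ≤ d·⟨Nu, u⟩` for every Schwartz `u`. -/
theorem nelson_second_hypothesis_Aminus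
    (g : ℝ → ℝ) (hg_smooth : ContDiff ℝ (⊤ : ℕ∞) g) (Cb : ℝ) (hg_bdd : ∀ x : ℝ, |g x| ≤ Cb)
    (Cg : ℝ) (hCg : 0 < Cg) (hg' : ∀ x : ℝ, |deriv g x| ≤ Cg * |g x|)
    (S : ℝ) (hS : 1 ≤ S)
    (jm : ℝ → ℝ) (hjm_smooth : ContDiff ℝ (⊤ : ℕ∞) jm)
    (hjm_range : ∀ t : ℝ, jm t ∈ Set.Icc (0 : ℝ) 1)
    (hjm_one : ∀ t : ℝ, t ≤ -2 → jm t = 1)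
    (hjm_zero : ∀ t : ℝ, -(3 / 2 : ℝ) ≤ t → jm t = 0)
    (C2 : ℝ) (hC2 : 0 < C2)
    (hxg' : ∀ x : ℝ, x ≤ -(3 / 2 : ℝ) → |x * deriv g x| ≤ C2 * |g x|) :
    ∃ d : ℝ, 0 < d ∧ ∀ (u : SchwartzMap ℝ V4) (lam : ℝ), 1 ≤ lam →
      ‖L2inner (Nop g lam ⇑u) (Amop jm S ⇑u) - L2inner (Amop jm S ⇑u) (Nop g lam ⇑u)‖ ≤
        d * (L2inner (Nop g lam ⇑u) ⇑u).re := by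
  have hS0 : 0 < S := by linarith
  set R := Rm jm S with hRdef
  have R_smooth : ContDiff ℝ (⊤ : ℕ∞) R := by
    have : R = fun x => (jm (x / S)) ^ 2 * x := rfl
    rw [this]
    exact ((hjm_smooth.comp (contDiff_id.div_const S)).pow 2).mul contDiff_id
  have sm : ∀ {f : ℝ → ℝ}, ContDiff ℝ (⊤ : ℕ∞) f →
      ContDiff ℝ (⊤ : ℕ∞) (deriv f) ∧ (∀ x, HasDerivAt f (deriv f x) x) := by
    intro f hf
    refine ⟨(contDiff_infty_iff_deriv.1 hf).2, fun x => ?_⟩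
    exact ((contDiff_infty_iff_deriv.1 hf).1 x).hasDerivAt
  obtain ⟨R1_smooth, dR⟩ := sm R_smooth
  obtain ⟨R2_smooth, dR1⟩ := sm R1_smooth
  obtain ⟨R3_smooth, dR2⟩ := sm R2_smooth
  obtain ⟨g1_smooth, dg⟩ := sm hg_smooth
  -- values of the derivatives of R away from the transition region
  have R1a : ∀ x, x < -2 * S → deriv R x = 1 := by
    intro x hx
    have : R =ᶠ[nhds x] fun y => y := by
      filter_upwards [Iio_mem_nhds hx] with y hy
      have hy' : y / S ≤ -2 := by
        rw [div_le_iff₀ hS0]; exact le_of_lt hy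
      simp [hRdef, Rm, hjm_one _ hy']
    rw [this.deriv_eq]; simp
  have R1b : ∀ x, -(3 / 2) * S < x → deriv R x = 0 := by
    intro x hx
    have : R =ᶠ[nhds x] fun _ => 0 := by
      filter_upwards [Ioi_mem_nhds hx] with y hy
      have hy' : -(3 / 2) ≤ y / S := by
        rw [le_div_iff₀ hS0]; exact le_of_lt hy
      simp [hRdef, Rm, hjm_zero _ hy']
    rw [this.deriv_eq]; simp
  obtain ⟨R2a, R2b⟩ := deriv_ends _ _ _ _ R1a R1b
  obtain ⟨R3a, R3b⟩ := deriv_ends _ _ _ _ R2a R2b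
  obtain ⟨K1, hK1⟩ := bdd_of_const_ends R1_smooth.continuous _ _ _ _ R1a R1b
  obtain ⟨K2, hK2⟩ := bdd_of_const_ends R2_smooth.continuous _ _ _ _ R2a R2b
  obtain ⟨K3, hK3⟩ := bdd_of_const_ends R3_smooth.continuous _ _ _ _ R3a R3b
  have R_le : ∀ x, |R x| ≤ |x| := by
    intro x
    obtain ⟨j0, j1⟩ := hjm_range (x / S)
    have : R x = (jm (x / S)) ^ 2 * x := rfl
    rw [this, abs_mul, abs_of_nonneg (sq_nonneg _)]
    have : (jm (x / S)) ^ 2 ≤ 1 := pow_le_one₀ j0 j1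
    nlinarith [abs_nonneg x]
  have Rg_le : ∀ x, |R x * deriv g x| ≤ C2 * |g x| := by
    intro x
    by_cases hx : x ≤ -(3 / 2)
    · refine le_trans ?_ (hxg' x hx)
      rw [abs_mul, abs_mul]
      exact mul_le_mul_of_nonneg_right (R_le x) (abs_nonneg _)
    · have hx' : -(3 / 2 : ℝ) ≤ x / S := by
        rw [le_div_iff₀ hS0]; push Not at hx; nlinarith
      have : R x = 0 := by simp [hRdef, Rm, hjm_zero _ hx']
      rw [this]; simp; positivity
  have hR : PB R := by
    obtain ⟨_, k, C, hC⟩ := PB.id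
    exact ⟨R_smooth.continuous, k, C, fun x => (R_le x).trans (hC x)⟩
  have hg : PB g := PB.of_bdd hg_smooth.continuous Cb hg_bdd
  have hg1 : PB (deriv g) := PB.of_bdd g1_smooth.continuous (Cg * Cb) fun x =>
    (hg' x).trans (mul_le_mul_of_nonneg_left (hg_bdd x) hCg.le)
  set K := max K1 K3
  have hK0 : 0 ≤ K := ((abs_nonneg _).trans (hK1 0)).trans (le_max_left _ _)
  refine ⟨2 * (2 * K + (2 * C2 + 2)), by positivity, fun u lam hlam => ?_⟩
  set W : ℝ → ℝ := fun x => lam ^ 2 * g x ^ 2 + (1 + x ^ 2) with hWdef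
  set W' : ℝ → ℝ := fun x => 2 * lam ^ 2 * (g x * deriv g x) + 2 * x with hW'def
  have hW : PB W := by
    have := ((PB.const (lam ^ 2)).mul (hg.mul hg)).add ((PB.const 1).add (PB.id.mul PB.id))
    convert this using 2 with x
    simp only [hWdef]; ring
  have hW' : PB W' :=
    ((PB.const (2 * lam ^ 2)).mul (hg.mul hg1)).add ((PB.const 2).mul PB.id)
  have dW : ∀ x, HasDerivAt W (W' x) x := by
    intro x
    have := (((dg x).pow 2).const_mul (lam ^ 2)).add (((hasDerivAt_id x).pow 2).const_add 1)
    refine this.congr_deriv ?_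
    simp [hW'def]; ring
  have bW : ∀ x, |W' x * R x| ≤ (2 * C2 + 2) * W x := by
    intro x
    have e : W' x * R x = 2 * lam ^ 2 * (g x * (R x * deriv g x)) + 2 * (x * R x) := by
      simp only [hW'def]; ring
    have e1 : |g x * (R x * deriv g x)| ≤ C2 * g x ^ 2 := by
      rw [abs_mul]
      calc _ ≤ |g x| * (C2 * |g x|) := mul_le_mul_of_nonneg_left (Rg_le x) (abs_nonneg _)
        _ = C2 * |g x| ^ 2 := by ring
        _ = _ := by rw [sq_abs]
    have e2 : |x * R x| ≤ x ^ 2 := by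
      rw [abs_mul]
      calc _ ≤ |x| * |x| := mul_le_mul_of_nonneg_left (R_le x) (abs_nonneg _)
        _ = _ := by rw [← sq, sq_abs]
    have e3 : |2 * lam ^ 2 * (g x * (R x * deriv g x))| ≤ 2 * lam ^ 2 * (C2 * g x ^ 2) := by
      rw [abs_mul, abs_of_nonneg (by positivity : (0 : ℝ) ≤ 2 * lam ^ 2)]
      exact mul_le_mul_of_nonneg_left e1 (by positivity)
    have e4 : |2 * (x * R x)| ≤ 2 * x ^ 2 := by
      rw [abs_mul, abs_of_nonneg (by norm_num : (0 : ℝ) ≤ 2)]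
      linarith
    rw [e]
    refine (abs_add_le _ _).trans ((add_le_add e3 e4).trans ?_)
    simp only [hWdef]
    have q1 : 0 ≤ lam ^ 2 * g x ^ 2 := by positivity
    have q2 : 0 ≤ C2 * (1 + x ^ 2) := by positivity
    nlinarith
  obtain ⟨v1, hv1⟩ := schwartz_deriv u
  obtain ⟨v2, hv2⟩ := schwartz_deriv v1
  have h0 := schwartz_RD u
  have h1 := schwartz_RD v1
  have h2 := schwartz_RD v2
  have d0 : ∀ x, HasDerivAt u (v1 x) x := fun x => by
    rw [hv1]; exact u.differentiableAt.hasDerivAt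
  have d1 : ∀ x, HasDerivAt v1 (v2 x) x := fun x => by
    rw [hv2]; exact v1.differentiableAt.hasDerivAt
  have hN : Nop g lam ⇑u = fun x => -(v2 x) + W x • u x := by
    funext x
    simp only [Nop, Qop, hWdef]
    rw [← hv1, ← hv2, add_smul (lam ^ 2 * g x ^ 2), add_assoc]
  have hA : Amop jm S ⇑u = fun x => R x • ((-Complex.I) • v1 x)
      - ((Complex.I / 2) * ((deriv R x : ℝ) : ℂ)) • u x := by
    funext x
    simp only [Amop, Dop]
    rw [← hv1]
  have hR1 : PB (deriv R) := PB.of_bdd R1_smooth.continuous K1 hK1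
  have N_rd : RD (Nop g lam ⇑u) := by
    rw [hN]; exact h2.neg.add (RD.smul hW h0)
  have A_rd : RD (Amop jm S ⇑u) := by
    rw [hA]
    have := (RD.smul hR (RD.csmul (-Complex.I) h1)).sub (RD.csmul (Complex.I / 2) (RD.smul hR1 h0))
    convert this using 3 with x
    rw [mul_smul, RCLike.real_smul_eq_coe_smul (K := ℂ)]
    rfl
  have key := core_bound W W' R (deriv R) (deriv (deriv R)) (deriv (deriv (deriv R))) K (2 * C2 + 2)
    (by positivity) hW hW' hR hR1 (PB.of_bdd R2_smooth.continuous K2 hK2)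
    (PB.of_bdd R3_smooth.continuous K3 hK3) dW dR dR1 dR2
    (fun x => (hK1 x).trans (le_max_left _ _)) (fun x => (hK3 x).trans (le_max_right _ _))
    (fun x => by simp only [hWdef]; nlinarith [sq_nonneg (lam * g x), sq_nonneg x]) bW
    u v1 v2 h0 h1 h2 d0 d1
  have conj_eq : L2inner (Amop jm S ⇑u) (Nop g lam ⇑u)
      = (starRingEnd ℂ) (L2inner (Nop g lam ⇑u) (Amop jm S ⇑u)) := by
    unfold L2inner
    rw [← integral_conj]
    simp only [inner_conj_symm]
  have im_eq : (L2inner (Nop g lam ⇑u) (Amop jm S ⇑u)).im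
      = ∫ x, (R x * ip (v2 x) (v1 x) - W x * R x * ip (u x) (v1 x)
        + deriv R x / 2 * ip (v2 x) (u x) - W x * deriv R x / 2 * ip (u x) (u x)) := by
    have := integral_im (𝕜 := ℂ) (N_rd.inner A_rd).integrable
    refine this.symm.trans ?_
    congr 1
    funext x
    rw [hN, hA]
    exact im_ptwise _ _ _ _ _ _
  have re_eq : (L2inner (Nop g lam ⇑u) ⇑u).re
      = ∫ x, (- ip (v2 x) (u x) + W x * ip (u x) (u x)) := by
    have := integral_re (𝕜 := ℂ) (N_rd.inner h0).integrable
    refine this.symm.trans ?_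
    congr 1
    funext x
    rw [hN]
    exact re_ptwise _ _ _
  rw [← im_eq, ← re_eq] at key
  rw [conj_eq, Complex.sub_conj, norm_mul, Complex.norm_I, mul_one, Complex.norm_real,
    Real.norm_eq_abs, abs_mul, abs_of_nonneg (by norm_num : (0 : ℝ) ≤ 2)]
  linarith
end
end
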